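/- Let f, g ∈ S(ℝ^d×ℝ^d, L¹(H,H')) be trace-class-operator-valued Schwartz functions and let f* denote the pointwise Hilbert space adjoint, f*(X) := f(X)* ∈ L¹(H',H). Then f* ♯ g ∈ S(ℝ^d×ℝ^d, L¹(H)) and ∫_{ℝ^d×ℝ^d} tr_H((f* ♯ g)(X)) dX = ∫_{ℝ^d×ℝ^d} tr_H(f(X)* g(X)) dX. -/

import Mathlib

open MeasureTheory Complex SchwartzMap
open scoped Real ENNReal NNReal

set_option maxHeartbeats 1000000
set_option synthInstance.maxHeartbeats 1000000

noncomputable section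

local notation "⟪" x ", " y "⟫_ℝ" => @inner ℝ _ _ x y
local notation "⟪" x ", " y "⟫_ℂ" => @inner ℂ _ _ x y

/-- Euclidean configuration space. -/
abbrev Ed (d : ℕ) : Type := EuclideanSpace ℝ (Fin d)

/-- Line integral of the vector potential `A` along the segment `[x, y]`. -/
def lineInt {d : ℕ} (A : Ed d → Ed d) (x y : Ed d) : ℝ :=
  ∫ s in (0:ℝ)..(1:ℝ), ⟪A (x + s • (y - x)), y - x⟫_ℝ

/-- The phase `e^{-i(y-x)·η} e^{-i(λ/ε)Γ_A(εx,εy)}` of the magnetic Weyl quantization. -/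
def wPhase {d : ℕ} (ε lam : ℝ) (A : Ed d → Ed d) (x y η : Ed d) : ℂ :=
  Complex.exp (-Complex.I * ((⟪y - x, η⟫_ℝ : ℝ) : ℂ)) *
    Complex.exp (-Complex.I * (((lam / ε) * lineInt A (ε • x) (ε • y) : ℝ) : ℂ))

/-- Magnetic Weyl quantization of an operator-valued symbol (absolutely convergent version,
with the momentum integral innermost, suitable for Schwartz-class symbols). -/
def opA {d : ℕ} {H H' : Type*} [NormedAddCommGroup H] [NormedSpace ℂ H]
    [NormedAddCommGroup H'] [NormedSpace ℂ H']
    (ε lam : ℝ) (A : Ed d → Ed d) (f : Ed d × Ed d → (H →L[ℂ] H')) (Ψ : Ed d → H) :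
    Ed d → H' :=
  fun x => (((2 * Real.pi) ^ d)⁻¹ : ℝ) •
    ∫ y : Ed d, ∫ η : Ed d, wPhase ε lam A x y η • f ((ε / 2) • (x + y), η) (Ψ y)

/-- Magnetic Weyl quantization as an (iterated, oscillatory) integral with the momentum
integral outermost; this realizes the oscillatory integral for Hörmander-class symbols. -/
def opW {d : ℕ} {H H' : Type*} [NormedAddCommGroup H] [NormedSpace ℂ H]
    [NormedAddCommGroup H'] [NormedSpace ℂ H']
    (ε lam : ℝ) (A : Ed d → Ed d) (f : Ed d × Ed d → (H →L[ℂ] H')) (Ψ : Ed d → H) :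
    Ed d → H' :=
  fun x => (((2 * Real.pi) ^ d)⁻¹ : ℝ) •
    ∫ η : Ed d, ∫ y : Ed d, wPhase ε lam A x y η • f ((ε / 2) • (x + y), η) (Ψ y)

/-- Directional derivative of a phase-space function. -/
def dirD {d : ℕ} {F : Type*} [NormedAddCommGroup F] [NormedSpace ℝ F]
    (v : Ed d × Ed d) (g : Ed d × Ed d → F) : Ed d × Ed d → F :=
  fun p => fderiv ℝ g p v

/-- Directions corresponding to the multi-indices `a` (position) and `α` (momentum). -/
def mkDirs {d : ℕ} (a α : List (Fin d)) : List (Ed d × Ed d) :=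
  (a.map fun j => ((EuclideanSpace.single j (1:ℝ) : Ed d), (0 : Ed d))) ++
    α.map fun j => ((0 : Ed d), (EuclideanSpace.single j (1:ℝ) : Ed d))

/-- The iterated partial derivative `∂_x^a ∂_ξ^α f`. -/
def mDeriv {d : ℕ} {F : Type*} [NormedAddCommGroup F] [NormedSpace ℝ F]
    (a α : List (Fin d)) (f : Ed d × Ed d → F) : Ed d × Ed d → F :=
  (mkDirs a α).foldr dirD f

/-- The Japanese bracket `⟨ξ⟩ = (1+|ξ|²)^{1/2}`. -/
def jb {d : ℕ} (ξ : Ed d) : ℝ := Real.sqrt (1 + ‖ξ‖ ^ 2)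

/-- Operator-valued Hörmander class `S^m_{ρ,δ}(B(H,H'))`. -/
structure IsHormander {d : ℕ} {H H' : Type*} [NormedAddCommGroup H] [NormedSpace ℂ H]
    [NormedAddCommGroup H'] [NormedSpace ℂ H'] (m ρ δ : ℝ)
    (f : Ed d × Ed d → (H →L[ℂ] H')) : Prop where
  smooth : ContDiff ℝ (⊤ : ℕ∞) f
  bound : ∀ a α : List (Fin d), ∃ C : ℝ, ∀ p : Ed d × Ed d,
    ‖mDeriv a α f p‖ ≤ C * jb p.2 ^ (m - ρ * (α.length : ℝ) + δ * (a.length : ℝ))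

/-- `A` is smooth with polynomially bounded derivatives of all orders. -/
def IsPolyVF {d : ℕ} (A : Ed d → Ed d) : Prop :=
  ContDiff ℝ (⊤ : ℕ∞) A ∧ ∀ n : ℕ, ∃ C : ℝ, ∃ k : ℕ, ∀ x, ‖iteratedFDeriv ℝ n A x‖ ≤ C * (1 + ‖x‖) ^ k

/-- Components `B_{jl} = ∂_j A_l − ∂_l A_j` of the magnetic field `B = dA`. -/
def Bcomp {d : ℕ} (A : Ed d → Ed d) (x : Ed d) (j l : Fin d) : ℝ :=
  fderiv ℝ (fun z => A z l) x (EuclideanSpace.single j (1:ℝ)) -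
    fderiv ℝ (fun z => A z j) x (EuclideanSpace.single l (1:ℝ))

/-- The magnetic field `B = dA` is bounded with bounded derivatives of all orders. -/
def IsBoundedField {d : ℕ} (A : Ed d → Ed d) : Prop :=
  ∀ (j l : Fin d) (n : ℕ), ∃ C : ℝ, ∀ x, ‖iteratedFDeriv ℝ n (fun z => Bcomp A z j l) x‖ ≤ C


/-- The trace norm of a bounded operator between Hilbert spaces, characterized as the
supremum of `∑ |⟨v i, T (e i)⟩|` over finite orthonormal families. -/
def traceNormE {H H' : Type*} [NormedAddCommGroup H] [InnerProductSpace ℂ H]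
    [NormedAddCommGroup H'] [InnerProductSpace ℂ H'] (T : H →L[ℂ] H') : ℝ≥0∞ :=
  ⨆ (n : ℕ) (e : Fin n → H) (v : Fin n → H') (_ : Orthonormal ℂ e) (_ : Orthonormal ℂ v),
    ENNReal.ofReal (∑ i, ‖⟪v i, T (e i)⟫_ℂ‖)

/-- `T` is a trace class operator. -/
def IsTraceClass {H H' : Type*} [NormedAddCommGroup H] [InnerProductSpace ℂ H]
    [NormedAddCommGroup H'] [InnerProductSpace ℂ H'] (T : H →L[ℂ] H') : Prop :=
  traceNormE T < ⊤

/-- The trace of an operator on a Hilbert space (computed in some fixed Hilbert basis;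
for trace class operators this is basis independent). -/
def trH {H : Type*} [NormedAddCommGroup H] [InnerProductSpace ℂ H] [CompleteSpace H]
    (T : H →L[ℂ] H) : ℂ :=
  ∑' i : (exists_hilbertBasis ℂ H).choose,
    ⟪((exists_hilbertBasis ℂ H).choose_spec.choose i : H),
      T ((exists_hilbertBasis ℂ H).choose_spec.choose i)⟫_ℂ

/-- `f` is a Schwartz function with values in the trace class operators `L¹(H,H')`:
all of its derivatives decay, in trace norm, faster than any inverse polynomial. -/
def TCSchwartz {d : ℕ} {H H' : Type*} [NormedAddCommGroup H] [InnerProductSpace ℂ H]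
    [NormedAddCommGroup H'] [InnerProductSpace ℂ H']
    (f : SchwartzMap (Ed d × Ed d) (H →L[ℂ] H')) : Prop :=
  (∀ X : Ed d × Ed d, IsTraceClass (f X)) ∧
    ∀ (k : ℕ) (a α : List (Fin d)), ∃ C : ℝ,
      ∀ X : Ed d × Ed d,
        ENNReal.ofReal ((1 + ‖X‖) ^ k) * traceNormE (mDeriv a α (⇑f) X) ≤ ENNReal.ofReal C

/-! ### Trace norm -/

section TraceNorm

variable {H H' H'' : Type*}
  [NormedAddCommGroup H] [InnerProductSpace ℂ H]
  [NormedAddCommGroup H'] [InnerProductSpace ℂ H']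
  [NormedAddCommGroup H''] [InnerProductSpace ℂ H'']

theorem le_traceNormE (T : H →L[ℂ] H') {ι : Type*} [Fintype ι] {e : ι → H} {v : ι → H'}
    (he : Orthonormal ℂ e) (hv : Orthonormal ℂ v) :
    ENNReal.ofReal (∑ i, ‖⟪v i, T (e i)⟫_ℂ‖) ≤ traceNormE T := by
  classical
  let σ := (Fintype.equivFin ι).symm
  have h1 : ∑ i, ‖⟪v i, T (e i)⟫_ℂ‖ = ∑ i, ‖⟪v (σ i), T (e (σ i))⟫_ℂ‖ :=
    (Equiv.sum_comp σ (fun i => ‖⟪v i, T (e i)⟫_ℂ‖)).symm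
  rw [h1]
  unfold traceNormE
  exact le_iSup_of_le (Fintype.card ι) (le_iSup_of_le (e ∘ σ) (le_iSup_of_le (v ∘ σ)
    (le_iSup_of_le (he.comp _ σ.injective) (le_iSup_of_le (hv.comp _ σ.injective) le_rfl))))

theorem traceNormE_le {T : H →L[ℂ] H'} {C : ℝ≥0∞}
    (h : ∀ (n : ℕ) (e : Fin n → H) (v : Fin n → H'), Orthonormal ℂ e → Orthonormal ℂ v →
      ENNReal.ofReal (∑ i, ‖⟪v i, T (e i)⟫_ℂ‖) ≤ C) : traceNormE T ≤ C := by
  unfold traceNormE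
  exact iSup_le fun n => iSup_le fun e => iSup_le fun v => iSup_le fun he => iSup_le fun hv =>
    h n e v he hv

theorem traceNormE_add_le (S T : H →L[ℂ] H') :
    traceNormE (S + T) ≤ traceNormE S + traceNormE T := by
  refine traceNormE_le fun n e v he hv => ?_
  refine le_trans ?_ (add_le_add (le_traceNormE S he hv) (le_traceNormE T he hv))
  rw [← ENNReal.ofReal_add (by positivity) (by positivity), ← Finset.sum_add_distrib]
  refine ENNReal.ofReal_le_ofReal (Finset.sum_le_sum fun i _ => ?_)
  rw [add_apply, inner_add_right]
  exact norm_add_le _ _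

theorem traceNormE_smul_le (c : ℂ) (T : H →L[ℂ] H') :
    traceNormE (c • T) ≤ ENNReal.ofReal ‖c‖ * traceNormE T := by
  refine traceNormE_le fun n e v he hv => ?_
  refine le_trans ?_ (mul_le_mul_right (le_traceNormE T he hv) _)
  rw [← ENNReal.ofReal_mul (by positivity), Finset.mul_sum]
  refine ENNReal.ofReal_le_ofReal (Finset.sum_le_sum fun i _ => ?_)
  rw [smul_apply, inner_smul_right, norm_mul]

theorem traceNormE_zero : traceNormE (0 : H →L[ℂ] H') = 0 := by
  refine le_antisymm (traceNormE_le fun n e v he hv => ?_) bot_le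
  simp

theorem ofReal_inner_le_traceNormE (T : H →L[ℂ] H') {x : H} {y : H'} (hx : ‖x‖ = 1)
    (hy : ‖y‖ = 1) : ENNReal.ofReal ‖⟪y, T x⟫_ℂ‖ ≤ traceNormE T := by
  have := le_traceNormE T (ι := Fin 1) (e := fun _ => x) (v := fun _ => y)
    (by rw [orthonormal_iff_ite]; intro i j; simp [Subsingleton.elim i j, inner_self_eq_norm_sq_to_K, hx])
    (by rw [orthonormal_iff_ite]; intro i j; simp [Subsingleton.elim i j, inner_self_eq_norm_sq_to_K, hy])
  simpa using this

theorem ofReal_norm_le_traceNormE (T : H →L[ℂ] H') : ENNReal.ofReal ‖T‖ ≤ traceNormE T := by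
  by_cases hT : traceNormE T = ⊤
  · rw [hT]; exact le_top
  rw [ENNReal.ofReal_le_iff_le_toReal hT]
  refine T.opNorm_le_bound ENNReal.toReal_nonneg fun x => ?_
  by_cases hx : x = 0
  · simp [hx]
  by_cases hTx : T x = 0
  · rw [hTx]; simp; positivity
  have hx' : ‖x‖ ≠ 0 := by simpa using hx
  have hTx' : ‖T x‖ ≠ 0 := by simpa using hTx
  have h := ofReal_inner_le_traceNormE T (x := ((‖x‖⁻¹ : ℝ) : ℂ) • x)
    (y := ((‖T x‖⁻¹ : ℝ) : ℂ) • T x)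
    (by rw [norm_smul]; simp [hx']) (by rw [norm_smul]; simp [hTx'])
  rw [ENNReal.ofReal_le_iff_le_toReal hT] at h
  rw [map_smul, inner_smul_left, inner_smul_right, inner_self_eq_norm_sq_to_K] at h
  simp only [norm_mul, norm_pow, RCLike.norm_conj, Complex.norm_real, norm_inv, norm_norm,
    RCLike.norm_ofReal, abs_norm, Complex.coe_algebraMap] at h
  have h2 : ‖T x‖⁻¹ * (‖x‖⁻¹ * ‖T x‖ ^ 2) = ‖T x‖ / ‖x‖ := by field_simp
  rw [h2, div_le_iff₀ (by positivity)] at h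
  exact h

theorem isTraceClass_zero : IsTraceClass (0 : H →L[ℂ] H') := by
  unfold IsTraceClass; rw [traceNormE_zero]; simp

theorem IsTraceClass.add {S T : H →L[ℂ] H'} (hS : IsTraceClass S) (hT : IsTraceClass T) :
    IsTraceClass (S + T) :=
  lt_of_le_of_lt (traceNormE_add_le S T) (ENNReal.add_lt_top.2 ⟨hS, hT⟩)

theorem IsTraceClass.smul (c : ℂ) {T : H →L[ℂ] H'} (hT : IsTraceClass T) :
    IsTraceClass (c • T) :=
  lt_of_le_of_lt (traceNormE_smul_le c T) (ENNReal.mul_lt_top (by simp) hT)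

/-- Trace class operators as a submodule. -/
def L1sub (H H' : Type*) [NormedAddCommGroup H] [InnerProductSpace ℂ H]
    [NormedAddCommGroup H'] [InnerProductSpace ℂ H'] : Submodule ℂ (H →L[ℂ] H') where
  carrier := {T | IsTraceClass T}
  add_mem' := fun hS hT => hS.add hT
  zero_mem' := isTraceClass_zero
  smul_mem' := fun c _ hT => hT.smul c

/-- The space of trace class operators, with the trace norm. -/
structure L1 (H H' : Type*) [NormedAddCommGroup H] [InnerProductSpace ℂ H]
    [NormedAddCommGroup H'] [InnerProductSpace ℂ H'] where
  /-- the underlying operator -/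
  val : H →L[ℂ] H'
  property : IsTraceClass val

theorem L1.ext' {S T : L1 H H'} (h : S.1 = T.1) : S = T := by
  cases S; cases T; cases h; rfl

/-- Auxiliary identification with the submodule. -/
def L1.equivSub (H H' : Type*) [NormedAddCommGroup H] [InnerProductSpace ℂ H]
    [NormedAddCommGroup H'] [InnerProductSpace ℂ H'] : L1 H H' ≃ ↥(L1sub H H') where
  toFun T := ⟨T.1, T.2⟩
  invFun T := ⟨T.1, T.2⟩
  left_inv _ := rfl
  right_inv _ := rfl

instance : AddCommGroup (L1 H H') := (L1.equivSub H H').addCommGroup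
instance : Module ℂ (L1 H H') := (L1.equivSub H H').module ℂ

theorem L1.add_val (S T : L1 H H') : (S + T).1 = S.1 + T.1 := rfl
theorem L1.sub_val (S T : L1 H H') : (S - T).1 = S.1 - T.1 := rfl
theorem L1.smul_val (c : ℂ) (T : L1 H H') : (c • T).1 = c • T.1 := rfl
theorem L1.zero_val : (0 : L1 H H').1 = 0 := rfl
instance : Norm (L1 H H') := ⟨fun T => (traceNormE T.1).toReal⟩

theorem L1.norm_def (T : L1 H H') : ‖T‖ = (traceNormE T.1).toReal := rfl

theorem L1.nn (T : L1 H H') : 0 ≤ ‖T‖ := ENNReal.toReal_nonneg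

theorem L1.ofReal_norm (T : L1 H H') : ENNReal.ofReal ‖T‖ = traceNormE T.1 :=
  ENNReal.ofReal_toReal (ne_of_lt T.2)

theorem L1.norm_le {T : L1 H H'} {C : ℝ} (hC : 0 ≤ C) (h : traceNormE T.1 ≤ ENNReal.ofReal C) :
    ‖T‖ ≤ C := by
  rw [← L1.ofReal_norm, ENNReal.ofReal_le_ofReal_iff hC] at h
  exact h

theorem L1.opNorm_le (T : L1 H H') : ‖T.1‖ ≤ ‖T‖ := by
  have h := ofReal_norm_le_traceNormE T.1
  rwa [← L1.ofReal_norm, ENNReal.ofReal_le_ofReal_iff (L1.nn T)] at h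

theorem L1.smul_norm_le (c : ℂ) (T : L1 H H') : ‖c • T‖ ≤ ‖c‖ * ‖T‖ := by
  refine L1.norm_le (mul_nonneg (norm_nonneg _) ENNReal.toReal_nonneg) ?_
  rw [ENNReal.ofReal_mul (norm_nonneg _), L1.ofReal_norm]
  exact traceNormE_smul_le c T.1

theorem L1.core : NormedSpace.Core ℂ (L1 H H') where
  norm_nonneg := fun T => ENNReal.toReal_nonneg
  norm_smul := fun c T => by
    refine le_antisymm (L1.smul_norm_le c T) ?_
    by_cases hc : c = 0
    · subst hc; rw [norm_zero, zero_mul]; exact ENNReal.toReal_nonneg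
    have h := L1.smul_norm_le c⁻¹ (c • T)
    rw [smul_smul, inv_mul_cancel₀ hc, one_smul, norm_inv] at h
    have : 0 < ‖c‖ := norm_pos_iff.2 hc
    calc ‖c‖ * ‖T‖ ≤ ‖c‖ * (‖c‖⁻¹ * ‖c • T‖) := by gcongr
      _ = ‖c • T‖ := by field_simp
  norm_triangle := fun S T => by
    refine L1.norm_le (add_nonneg ENNReal.toReal_nonneg ENNReal.toReal_nonneg) ?_
    rw [ENNReal.ofReal_add (L1.nn S) (L1.nn T), L1.ofReal_norm,
      L1.ofReal_norm]
    exact traceNormE_add_le S.1 T.1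
  norm_eq_zero_iff := fun T => by
    constructor
    · intro h
      have := L1.opNorm_le T
      rw [h] at this
      exact L1.ext' (norm_le_zero_iff.1 this)
    · rintro rfl
      show (traceNormE (0 : H →L[ℂ] H')).toReal = 0
      rw [traceNormE_zero]; rfl

instance : NormedAddCommGroup (L1 H H') := NormedAddCommGroup.ofCore L1.core
instance : NormedSpace ℂ (L1 H H') := NormedSpace.ofCore L1.core

/-- The inclusion of the trace class operators in the bounded operators. -/
def L1.incl (H H' : Type*) [NormedAddCommGroup H] [InnerProductSpace ℂ H]
    [NormedAddCommGroup H'] [InnerProductSpace ℂ H'] : L1 H H' →L[ℂ] (H →L[ℂ] H') :=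
  LinearMap.mkContinuous
    { toFun := fun T => T.1
      map_add' := fun _ _ => rfl
      map_smul' := fun _ _ => rfl } 1 (fun T => by rw [one_mul]; exact L1.opNorm_le T)

theorem L1.incl_apply (T : L1 H H') : L1.incl H H' T = T.1 := rfl

theorem L1.incl_injective : Function.Injective (L1.incl H H') := fun _ _ h => L1.ext' h

theorem L1.sum_le (T : L1 H H') {ι : Type*} [Fintype ι] {e : ι → H} {v : ι → H'}
    (he : Orthonormal ℂ e) (hv : Orthonormal ℂ v) : ∑ i, ‖⟪v i, T.1 (e i)⟫_ℂ‖ ≤ ‖T‖ := by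
  have h := le_traceNormE T.1 he hv
  rwa [← L1.ofReal_norm, ENNReal.ofReal_le_ofReal_iff (norm_nonneg _)] at h

theorem L1.norm_le_of_sum {T : L1 H H'} {C : ℝ} (hC : 0 ≤ C)
    (h : ∀ (n : ℕ) (e : Fin n → H) (v : Fin n → H'), Orthonormal ℂ e → Orthonormal ℂ v →
      ∑ i, ‖⟪v i, T.1 (e i)⟫_ℂ‖ ≤ C) : ‖T‖ ≤ C :=
  L1.norm_le hC (traceNormE_le fun n e v he hv => ENNReal.ofReal_le_ofReal (h n e v he hv))

instance L1.completeSpace [CompleteSpace H'] : CompleteSpace (L1 H H') := by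
  refine Metric.complete_of_cauchySeq_tendsto fun u hu => ?_
  have hu' : CauchySeq (fun n => L1.incl H H' (u n)) :=
    (L1.incl H H').uniformContinuous.comp_cauchySeq hu
  obtain ⟨T, hT⟩ := cauchySeq_tendsto_of_complete hu'
  have hconv : ∀ (x : H) (y : H'), Filter.Tendsto (fun n => ⟪y, (u n).1 x⟫_ℂ) Filter.atTop
      (nhds ⟪y, T x⟫_ℂ) := fun x y =>
    Filter.Tendsto.inner tendsto_const_nhds
      (((ContinuousLinearMap.apply ℂ H' x).continuous.tendsto T).comp hT)
  obtain ⟨R, hR⟩ := hu.norm_bddAbove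
  have hTC : IsTraceClass T := by
    refine lt_of_le_of_lt (traceNormE_le (C := ENNReal.ofReal R) fun n e v he hv => ?_)
      ENNReal.ofReal_lt_top
    refine ENNReal.ofReal_le_ofReal ?_
    refine le_of_tendsto (tendsto_finsetSum _ fun i _ => (hconv (e i) (v i)).norm)
      (Filter.Eventually.of_forall fun m => ?_)
    exact (L1.sum_le (u m) he hv).trans (hR ⟨m, rfl⟩)
  refine ⟨⟨T, hTC⟩, ?_⟩
  rw [Metric.tendsto_atTop]
  intro ε hε
  obtain ⟨N, hN⟩ := Metric.cauchySeq_iff.1 hu (ε / 2) (half_pos hε)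
  refine ⟨N, fun n hn => ?_⟩
  refine lt_of_le_of_lt ?_ (half_lt_self hε)
  rw [dist_eq_norm]
  refine L1.norm_le_of_sum (half_pos hε).le fun k e v he hv => ?_
  have hlim : Filter.Tendsto (fun m => ∑ i, ‖⟪v i, (u n).1 (e i)⟫_ℂ - ⟪v i, (u m).1 (e i)⟫_ℂ‖)
      Filter.atTop (nhds (∑ i, ‖⟪v i, (u n).1 (e i)⟫_ℂ - ⟪v i, T (e i)⟫_ℂ‖)) :=
    tendsto_finsetSum _ fun i _ => (tendsto_const_nhds.sub (hconv (e i) (v i))).norm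
  have hmain : ∑ i, ‖⟪v i, (u n).1 (e i)⟫_ℂ - ⟪v i, T (e i)⟫_ℂ‖ ≤ ε / 2 := by
    refine le_of_tendsto hlim (Filter.eventually_atTop.2 ⟨N, fun m hm => ?_⟩)
    have h1 := hN n hn m hm
    rw [dist_eq_norm] at h1
    refine le_trans (le_of_eq ?_) ((L1.sum_le (u n - u m) he hv).trans h1.le)
    refine Finset.sum_congr rfl fun i _ => ?_
    rw [← inner_sub_right]; rfl
  refine le_trans (le_of_eq ?_) hmain
  refine Finset.sum_congr rfl fun i _ => ?_
  rw [← inner_sub_right]; rfl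

/-- Trace norm bound for `∑ ⟨N w, T E w⟩`. -/
theorem sum_inner_comp_le [CompleteSpace H'] [CompleteSpace H''] (T : L1 H H') (S : H' →L[ℂ] H'')
    {n : ℕ} {e : Fin n → H} {v : Fin n → H''} (he : Orthonormal ℂ e) (hv : Orthonormal ℂ v) :
    ‖∑ i, ⟪v i, S (T.1 (e i))⟫_ℂ‖ ≤ ‖S‖ * ‖T‖ := by
  classical
  let δ := EuclideanSpace.basisFun (Fin n) ℂ
  let Vl : EuclideanSpace ℂ (Fin n) →ₗ[ℂ] H'' := δ.toBasis.constr ℂ v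
  let El : EuclideanSpace ℂ (Fin n) →ₗ[ℂ] H := δ.toBasis.constr ℂ e
  have hVδ : ∀ i, Vl (δ i) = v i := fun i => by
    have := δ.toBasis.constr_basis ℂ v i
    rwa [OrthonormalBasis.coe_toBasis] at this
  have hEδ : ∀ i, El (δ i) = e i := fun i => by
    have := δ.toBasis.constr_basis ℂ e i
    rwa [OrthonormalBasis.coe_toBasis] at this
  let Vi := Vl.isometryOfOrthonormal (v := δ.toBasis) (by simpa using δ.orthonormal)
    (by
      have : ⇑Vl ∘ ⇑δ.toBasis = v := by ext1 i; simp [hVδ]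
      rw [this]; exact hv)
  let Ei := El.isometryOfOrthonormal (v := δ.toBasis) (by simpa using δ.orthonormal)
    (by
      have : ⇑El ∘ ⇑δ.toBasis = e := by ext1 i; simp [hEδ]
      rw [this]; exact he)
  have hViδ : ∀ i, Vi (δ i) = v i := hVδ
  have hEiδ : ∀ i, Ei (δ i) = e i := hEδ
  let N : EuclideanSpace ℂ (Fin n) →L[ℂ] H' :=
    (ContinuousLinearMap.adjoint S).comp Vi.toContinuousLinearMap
  have hN : ‖N‖ ≤ ‖S‖ := by
    refine N.opNorm_le_bound (norm_nonneg _) fun c => ?_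
    calc ‖N c‖ ≤ ‖ContinuousLinearMap.adjoint S‖ * ‖Vi c‖ :=
          ContinuousLinearMap.le_opNorm (ContinuousLinearMap.adjoint S) (Vi c)
      _ = ‖S‖ * ‖c‖ := by rw [LinearIsometryEquiv.norm_map, Vi.norm_map]
  let M : EuclideanSpace ℂ (Fin n) →L[ℂ] EuclideanSpace ℂ (Fin n) :=
    (ContinuousLinearMap.adjoint N).comp N
  have hM : (M : EuclideanSpace ℂ (Fin n) →ₗ[ℂ] EuclideanSpace ℂ (Fin n)).IsSymmetric := by
    intro x y
    simp [M, ContinuousLinearMap.adjoint_inner_left, ContinuousLinearMap.adjoint_inner_right]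
  let w := hM.eigenvectorBasis (n := n) (by simp)
  let Q : EuclideanSpace ℂ (Fin n) →L[ℂ] EuclideanSpace ℂ (Fin n) :=
    (ContinuousLinearMap.adjoint N).comp (T.1.comp Ei.toContinuousLinearMap)
  have hQ : ∀ x, ⟪x, Q x⟫_ℂ = ⟪N x, T.1 (Ei x)⟫_ℂ := fun x => by
    simp [Q, ContinuousLinearMap.adjoint_inner_right]
  have htr : ∑ i, ⟪v i, S (T.1 (e i))⟫_ℂ = ∑ k, ⟪N (w k), T.1 (Ei (w k))⟫_ℂ := by
    have h1 := LinearMap.trace_eq_sum_inner (Q : EuclideanSpace ℂ (Fin n) →ₗ[ℂ] _) δ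
    have h2 := LinearMap.trace_eq_sum_inner (Q : EuclideanSpace ℂ (Fin n) →ₗ[ℂ] _) w
    rw [h1] at h2
    simp only [ContinuousLinearMap.coe_coe, hQ] at h2
    rw [← h2]
    refine Finset.sum_congr rfl fun i _ => ?_
    rw [hEiδ]
    show _ = ⟪ContinuousLinearMap.adjoint S (Vi (δ i)), _⟫_ℂ
    rw [hViδ, ContinuousLinearMap.adjoint_inner_left]
  have hortho : ∀ k l, k ≠ l → ⟪N (w k), N (w l)⟫_ℂ = 0 := fun k l hkl => by
    have h1 : ⟪N (w k), N (w l)⟫_ℂ = ⟪w k, M (w l)⟫_ℂ := by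
      simp [M, ContinuousLinearMap.adjoint_inner_right]
    have h2 : M (w l) = ((hM.eigenvalues (by simp) l : ℝ) : ℂ) • w l :=
      hM.apply_eigenvectorBasis (by simp) l
    rw [h1, h2, inner_smul_right, w.orthonormal.2 hkl, mul_zero]
  let K := {k : Fin n // N (w k) ≠ 0}
  let u : K → H' := fun k => ((‖N (w k)‖⁻¹ : ℝ) : ℂ) • N (w k)
  have hu : Orthonormal ℂ u := by
    constructor
    · intro k
      have : ‖N (w k)‖ ≠ 0 := by simpa using k.2
      simp only [u]; rw [norm_smul]; simp [this]
    · intro k l hkl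
      simp only [u]
      rw [inner_smul_left, inner_smul_right, hortho k l (fun h => hkl (Subtype.ext h))]
      simp
  have hEw : Orthonormal ℂ (fun k : K => Ei (w k)) :=
    (w.orthonormal.comp_linearIsometry Ei).comp _ Subtype.val_injective
  have hs := L1.sum_le T hEw hu
  rw [htr]
  calc ‖∑ k, ⟪N (w k), T.1 (Ei (w k))⟫_ℂ‖ ≤ ∑ k, ‖⟪N (w k), T.1 (Ei (w k))⟫_ℂ‖ := norm_sum_le _ _
    _ = ∑ k : K, ‖⟪N (w k), T.1 (Ei (w k))⟫_ℂ‖ := by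
      rw [← Finset.sum_subtype (Finset.univ.filter fun k => N (w k) ≠ 0)
        (p := fun k => N (w k) ≠ 0) (by simp) (fun k => ‖⟪N (w k), T.1 (Ei (w k))⟫_ℂ‖)]
      rw [Finset.sum_filter_of_ne]
      intro k _ hk h0
      exact hk (by rw [h0]; simp)
    _ ≤ ∑ k : K, ‖S‖ * ‖⟪u k, T.1 (Ei (w k))⟫_ℂ‖ := by
      refine Finset.sum_le_sum fun k _ => ?_
      have hne : ‖N (w k)‖ ≠ 0 := by simpa using k.2
      have hle : ‖N (w k)‖ ≤ ‖S‖ := by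
        have := (N.le_opNorm (w k)).trans (mul_le_mul_of_nonneg_right hN (norm_nonneg _))
        rwa [w.orthonormal.1, mul_one] at this
      simp only [u]
      rw [inner_smul_left, norm_mul]
      simp only [RCLike.norm_conj, Complex.norm_real, norm_inv, norm_norm]
      calc _ = ‖N (w k)‖ * (‖N (w k)‖⁻¹ * ‖⟪N (w k), T.1 (Ei (w k))⟫_ℂ‖) := by field_simp
        _ ≤ _ := by gcongr
    _ = ‖S‖ * ∑ k : K, ‖⟪u k, T.1 (Ei (w k))⟫_ℂ‖ := by rw [Finset.mul_sum]
    _ ≤ ‖S‖ * ‖T‖ := by gcongr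

theorem sum_norm_inner_comp_le [CompleteSpace H'] [CompleteSpace H''] (T : L1 H H')
    (S : H' →L[ℂ] H'') {n : ℕ} {e : Fin n → H} {v : Fin n → H''} (he : Orthonormal ℂ e)
    (hv : Orthonormal ℂ v) : ∑ i, ‖⟪v i, S (T.1 (e i))⟫_ℂ‖ ≤ ‖S‖ * ‖T‖ := by
  have hc : ∀ z : ℂ, ∃ c : ℂ, ‖c‖ = 1 ∧ (starRingEnd ℂ) c * z = (‖z‖ : ℂ) := by
    intro z
    by_cases hz : z = 0
    · exact ⟨1, by simp, by simp [hz]⟩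
    · have hz' : (‖z‖ : ℂ) ≠ 0 := by simpa using hz
      refine ⟨z / ‖z‖, by simp [hz], ?_⟩
      rw [map_div₀, Complex.conj_ofReal, div_mul_eq_mul_div, mul_comm, Complex.mul_conj,
        Complex.normSq_eq_norm_sq]
      push_cast
      field_simp
  choose c hc1 hc2 using hc
  let v' : Fin n → H'' := fun i => c (⟪v i, S (T.1 (e i))⟫_ℂ) • v i
  have hv' : Orthonormal ℂ v' := by
    constructor
    · intro i; simp only [v']; rw [norm_smul, hc1, hv.1, mul_one]
    · intro i j hij; simp only [v']; rw [inner_smul_left, inner_smul_right, hv.2 hij]; simp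
  have h := sum_inner_comp_le T S he hv'
  have h2 : ∑ i, ⟪v' i, S (T.1 (e i))⟫_ℂ = ((∑ i, ‖⟪v i, S (T.1 (e i))⟫_ℂ‖ : ℝ) : ℂ) := by
    push_cast
    refine Finset.sum_congr rfl fun i _ => ?_
    simp only [v']
    rw [inner_smul_left, hc2]
  rw [h2, Complex.norm_real, Real.norm_of_nonneg (by positivity)] at h
  exact h

theorem isTraceClass_comp [CompleteSpace H'] [CompleteSpace H''] (S : H' →L[ℂ] H'')
    (T : L1 H H') : IsTraceClass (S.comp T.1) :=
  lt_of_le_of_lt (traceNormE_le (C := ENNReal.ofReal (‖S‖ * ‖T‖)) fun n e v he hv =>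
    ENNReal.ofReal_le_ofReal (sum_norm_inner_comp_le T S he hv)) ENNReal.ofReal_lt_top

/-- Composition of a bounded and a trace class operator. -/
def L1.compL (H H' H'' : Type*) [NormedAddCommGroup H] [InnerProductSpace ℂ H]
    [NormedAddCommGroup H'] [InnerProductSpace ℂ H']
    [NormedAddCommGroup H''] [InnerProductSpace ℂ H''] [CompleteSpace H'] [CompleteSpace H''] :
    (H' →L[ℂ] H'') →L[ℂ] L1 H H' →L[ℂ] L1 H H'' :=
  LinearMap.mkContinuous₂
    (LinearMap.mk₂ ℂ (fun S T => (⟨S.comp T.1, isTraceClass_comp S T⟩ : L1 H H''))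
      (fun _ _ _ => L1.ext' (ContinuousLinearMap.add_comp _ _ _))
      (fun _ _ _ => L1.ext' (ContinuousLinearMap.smul_comp _ _ _))
      (fun _ _ _ => L1.ext' (ContinuousLinearMap.comp_add _ _ _))
      (fun _ _ _ => L1.ext' (ContinuousLinearMap.comp_smul _ _ _)))
    1 (fun S T => by
      rw [one_mul]
      exact L1.norm_le_of_sum (by positivity) fun _ _ _ he hv => sum_norm_inner_comp_le T S he hv)

theorem L1.compL_apply [CompleteSpace H'] [CompleteSpace H''] (S : H' →L[ℂ] H'') (T : L1 H H') :
    (L1.compL H H' H'' S T).1 = S.comp T.1 := rfl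

theorem trH_summable [CompleteSpace H] (T : L1 H H) {s : Set H} (b : HilbertBasis s ℂ H) :
    Summable (fun i => ‖⟪(b i : H), T.1 (b i)⟫_ℂ‖) ∧
      ∑' i, ‖⟪(b i : H), T.1 (b i)⟫_ℂ‖ ≤ ‖T‖ := by
  have hb : ∀ u : Finset s, ∑ i ∈ u, ‖⟪(b i : H), T.1 (b i)⟫_ℂ‖ ≤ ‖T‖ := by
    intro u
    rw [← Finset.sum_coe_sort]
    exact L1.sum_le T (ι := u) (e := fun i => b i) (v := fun i => b i)
      (b.orthonormal.comp _ Subtype.val_injective) (b.orthonormal.comp _ Subtype.val_injective)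
  exact ⟨summable_of_sum_le (fun _ => norm_nonneg _) hb,
    Real.tsum_le_of_sum_le (fun _ => norm_nonneg _) hb⟩

/-- The trace as a continuous functional on the trace class operators. -/
def L1.trL (H : Type*) [NormedAddCommGroup H] [InnerProductSpace ℂ H] [CompleteSpace H] :
    L1 H H →L[ℂ] ℂ :=
  LinearMap.mkContinuous
    { toFun := fun T => trH T.1
      map_add' := fun S T => by
        have hS := (trH_summable S (exists_hilbertBasis ℂ H).choose_spec.choose).1.of_norm
        have hT := (trH_summable T (exists_hilbertBasis ℂ H).choose_spec.choose).1.of_norm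
        unfold trH
        rw [← hS.tsum_add hT]
        refine tsum_congr fun i => ?_
        rw [← inner_add_right]; rfl
      map_smul' := fun c T => by
        unfold trH
        rw [smul_eq_mul, RingHom.id_apply, ← tsum_mul_left]
        refine tsum_congr fun i => ?_
        rw [← inner_smul_right]; rfl } 1 (fun T => by
      rw [one_mul]
      have h := trH_summable T (exists_hilbertBasis ℂ H).choose_spec.choose
      exact (norm_tsum_le_tsum_norm h.1).trans h.2)

theorem L1.trL_apply [CompleteSpace H] (T : L1 H H) : L1.trL H T = trH T.1 := rfl

end TraceNorm

/-! ### Closed classes of functions -/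

section Closed

theorem closed_class {W F ι : Type*} [NormedAddCommGroup W] [NormedSpace ℝ W]
    [NormedAddCommGroup F] [NormedSpace ℝ F] [Fintype ι] (c : ι → W →L[ℝ] ℝ) (S : Set (W → F))
    (h : ∀ u ∈ S, ∃ D : ι → W → F, (∀ i, D i ∈ S) ∧
      ∀ x, HasFDerivAt u (∑ i, (c i).smulRight (D i x)) x) :
    ∀ n : ℕ, ∀ u ∈ S, ContDiff ℝ n u ∧ ∃ (m : ℕ) (D : Fin m → W → F) (C : ℝ), 0 ≤ C ∧
      (∀ i, D i ∈ S) ∧ ∀ x, ‖iteratedFDeriv ℝ n u x‖ ≤ C * ∑ i, ‖D i x‖ := by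
  intro n
  induction n with
  | zero =>
    intro u hu
    refine ⟨?_, 1, fun _ => u, 1, zero_le_one, fun _ => hu, fun x => by simp⟩
    obtain ⟨D, -, hD⟩ := h u hu
    have : Continuous u := continuous_iff_continuousAt.2 fun x => (hD x).differentiableAt.continuousAt
    exact_mod_cast (contDiff_zero (𝕜 := ℝ)).2 this
  | succ n ih =>
    intro u hu
    obtain ⟨D, hDS, hD⟩ := h u hu
    let L : ι → F →L[ℝ] (W →L[ℝ] F) := fun i => ContinuousLinearMap.smulRightL ℝ W F (c i)
    have hfd : fderiv ℝ u = fun x => ∑ i, (L i ∘ D i) x := by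
      ext1 x; rw [(hD x).fderiv]; rfl
    have hLD : ∀ i, ContDiff ℝ n (L i ∘ D i) := fun i => (L i).contDiff.comp (ih (D i) (hDS i)).1
    have hcd : ContDiff ℝ n (fderiv ℝ u) := by
      rw [hfd]; exact ContDiff.sum fun i _ => hLD i
    refine ⟨?_, ?_⟩
    · have := contDiff_succ_iff_fderiv.2
        ⟨fun x => (hD x).differentiableAt, by simp, hcd⟩
      exact_mod_cast this
    · choose hcD m D' C hC hD'S hD' using fun i => ih (D i) (hDS i)
      let κ := Σ i, Fin (m i)
      let e := (Fintype.equivFin κ).symm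
      refine ⟨Fintype.card κ, fun k => D' (e k).1 (e k).2, ∑ i, ‖L i‖ * C i,
        Finset.sum_nonneg fun i _ => mul_nonneg (norm_nonneg (L i)) (hC i),
        fun k => hD'S _ _, fun x => ?_⟩
      rw [← norm_iteratedFDeriv_fderiv, hfd]
      have hsum : iteratedFDeriv ℝ n (fun x => ∑ i, (L i ∘ D i) x) x
          = ∑ i, iteratedFDeriv ℝ n (L i ∘ D i) x := by
        exact iteratedFDeriv_fun_sum_apply (fun i _ => (hLD i).contDiffAt)
      have h2 : ∑ k, ‖D' (e k).1 (e k).2 x‖ = ∑ i, ∑ j, ‖D' i j x‖ := by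
        rw [Equiv.sum_comp e (fun p : κ => ‖D' p.1 p.2 x‖)]
        exact Fintype.sum_sigma' (fun i j => ‖D' i j x‖)
      rw [hsum, h2, Finset.sum_mul]
      refine (norm_sum_le _ _).trans (Finset.sum_le_sum fun i _ => ?_)
      refine ((L i).norm_iteratedFDeriv_comp_left (hcD i).contDiffAt le_rfl).trans ?_
      rw [mul_assoc]
      refine mul_le_mul_of_nonneg_left ((hD' i x).trans ?_) (norm_nonneg _)
      refine mul_le_mul_of_nonneg_left ?_ (hC i)
      exact Finset.single_le_sum (f := fun i => ∑ j, ‖D' i j x‖)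
        (fun i _ => Finset.sum_nonneg fun j _ => norm_nonneg _) (Finset.mem_univ i)

theorem closed_class_schwartz {W F ι : Type*} [NormedAddCommGroup W] [NormedSpace ℝ W]
    [NormedAddCommGroup F] [NormedSpace ℝ F] [Fintype ι] (c : ι → W →L[ℝ] ℝ) (S : Set (W → F))
    (h : ∀ u ∈ S, ∃ D : ι → W → F, (∀ i, D i ∈ S) ∧
      ∀ x, HasFDerivAt u (∑ i, (c i).smulRight (D i x)) x)
    (hd : ∀ u ∈ S, ∀ k : ℕ, ∃ C : ℝ, ∀ x, ‖x‖ ^ k * ‖u x‖ ≤ C) (u : W → F) (hu : u ∈ S) :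
    ∃ s : 𝓢(W, F), ⇑s = u := by
  have H := closed_class c S h
  refine ⟨⟨u, ?_, ?_⟩, rfl⟩
  · exact contDiff_infty.2 fun n => (H n u hu).1
  · intro k n
    obtain ⟨-, m, D, C, hC, hDS, hD⟩ := H n u hu
    choose K hK using fun i => hd (D i) (hDS i) k
    refine ⟨C * ∑ i, K i, fun x => ?_⟩
    calc ‖x‖ ^ k * ‖iteratedFDeriv ℝ n u x‖ ≤ ‖x‖ ^ k * (C * ∑ i, ‖D i x‖) := by
          gcongr; exact hD x
      _ = C * ∑ i, ‖x‖ ^ k * ‖D i x‖ := by rw [← Finset.mul_sum]; ring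
      _ ≤ C * ∑ i, K i := by gcongr with i _; exact hK i x

theorem closed_class_temperate {W F ι : Type*} [NormedAddCommGroup W] [NormedSpace ℝ W]
    [NormedAddCommGroup F] [NormedSpace ℝ F] [Fintype ι] (c : ι → W →L[ℝ] ℝ) (S : Set (W → F))
    (h : ∀ u ∈ S, ∃ D : ι → W → F, (∀ i, D i ∈ S) ∧
      ∀ x, HasFDerivAt u (∑ i, (c i).smulRight (D i x)) x)
    (hd : ∀ u ∈ S, ∃ (k : ℕ) (C : ℝ), ∀ x, ‖u x‖ ≤ C * (1 + ‖x‖) ^ k) (u : W → F) (hu : u ∈ S) :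
    u.HasTemperateGrowth := by
  have H := closed_class c S h
  refine ⟨?_, ?_⟩
  · exact contDiff_infty.2 fun n => (H n u hu).1
  · intro n
    obtain ⟨-, m, D, C, hC, hDS, hD⟩ := H n u hu
    choose k K hK using fun i => hd (D i) (hDS i)
    have hK0 : ∀ i, 0 ≤ K i := fun i => by
      have := (norm_nonneg _).trans (hK i 0)
      simpa using this
    refine ⟨∑ i, k i, C * ∑ i, K i, fun x => (hD x).trans ?_⟩
    rw [mul_assoc, Finset.sum_mul]
    gcongr with i _
    refine (hK i x).trans ?_
    have := hK0 i
    gcongr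
    · linarith [norm_nonneg x]
    · exact Finset.single_le_sum (f := k) (fun i _ => Nat.zero_le _) (Finset.mem_univ i)

theorem schwartz_bound {W F : Type*} [NormedAddCommGroup W] [NormedSpace ℝ W]
    [NormedAddCommGroup F] [NormedSpace ℝ F] (g : 𝓢(W, F)) (k : ℕ) :
    ∃ C : ℝ, 0 ≤ C ∧ ∀ x, (1 + ‖x‖) ^ k * ‖g x‖ ≤ C := by
  refine ⟨2 ^ k * ((Finset.Iic (k, 0)).sup fun m => SchwartzMap.seminorm ℝ m.1 m.2) g,
    mul_nonneg (by positivity) (apply_nonneg _ _), fun x => ?_⟩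
  have := one_add_le_sup_seminorm_apply (𝕜 := ℝ) (m := (k, 0)) le_rfl le_rfl g x
  simpa using this

end Closed

/-! ### Partial Fourier transform -/

section PartialFourier

open scoped FourierTransform LineDeriv

variable {E V F : Type*} [NormedAddCommGroup E] [NormedSpace ℝ E]
  [NormedAddCommGroup V] [InnerProductSpace ℝ V] [FiniteDimensional ℝ V]
  [MeasurableSpace V] [BorelSpace V]
  [NormedAddCommGroup F] [NormedSpace ℂ F]

/-- Slices of a Schwartz function. -/
def slice (g : 𝓢(E × V, F)) (x : E) : 𝓢(V, F) :=
  SchwartzMap.compCLM ℝ (g := fun η : V => ((x, η) : E × V))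
    (by
      have h1 : (fun η : V => ((x, η) : E × V))
          = fun η => ((x, 0) : E × V) + ContinuousLinearMap.inr ℝ E V η := by
        ext η <;> simp
      rw [h1]
      exact (Function.HasTemperateGrowth.const _).add
        (ContinuousLinearMap.inr ℝ E V).hasTemperateGrowth)
    ⟨1, 1, fun η => by
      have : ‖η‖ ≤ ‖((x, η) : E × V)‖ := le_max_right _ _
      linarith⟩ g

theorem slice_apply (g : 𝓢(E × V, F)) (x : E) (η : V) : slice g x η = g (x, η) := rfl

/-- The partial Fourier transform (as a function). -/
def pfun (g : E × V → F) : E × V → F :=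
  fun p => ∫ η : V, Complex.exp (-Complex.I * ((⟪p.2, η⟫_ℝ : ℝ) : ℂ)) • g (p.1, η)

theorem norm_phase (t : ℝ) : ‖Complex.exp (-Complex.I * (t : ℂ))‖ = 1 := by
  rw [show -Complex.I * (t : ℂ) = ((-t : ℝ) : ℂ) * Complex.I by push_cast; ring]
  exact Complex.norm_exp_ofReal_mul_I _

theorem pfun_eq_fourier (g : 𝓢(E × V, F)) (p : E × V) :
    pfun g p = 𝓕 (slice g p.1) ((2 * π)⁻¹ • p.2) := by
  rw [SchwartzMap.fourier_coe, Real.fourier_eq']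
  unfold pfun
  refine integral_congr_ae (Filter.Eventually.of_forall fun η => ?_)
  simp only [slice_apply]
  congr 2
  rw [inner_smul_right, real_inner_comm]
  push_cast
  have : (π : ℂ) ≠ 0 := by exact_mod_cast Real.pi_ne_zero
  field_simp

theorem pfun_lineDeriv (g : 𝓢(E × V, F)) (m : V) (p : E × V) :
    pfun (∂_{((0 : E), m)} g : 𝓢(E × V, F)) p = (Complex.I * ((⟪p.2, m⟫_ℝ : ℝ) : ℂ)) • pfun g p := by
  rw [pfun_eq_fourier, pfun_eq_fourier]
  have h1 : slice (∂_{((0 : E), m)} g : 𝓢(E × V, F)) p.1 = ∂_{m} (slice g p.1) := by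
    ext η
    rw [slice_apply, SchwartzMap.lineDerivOp_apply_eq_fderiv, SchwartzMap.lineDerivOp_apply_eq_fderiv]
    have h2 : HasFDerivAt (slice g p.1)
        ((fderiv ℝ g (p.1, η)).comp (ContinuousLinearMap.inr ℝ E V)) η :=
      HasFDerivAt.comp (g := ⇑g) (f := fun η : V => ((p.1, η) : E × V)) η
        (g.hasFDerivAt (p.1, η)) (hasFDerivAt_prodMk_right p.1 η)
    rw [h2.fderiv]; rfl
  have ht : (fun x : V => (⟪x, m⟫_ℝ : ℝ)).HasTemperateGrowth :=
    Function.hasTemperateGrowth_inner_left m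
  rw [h1, SchwartzMap.fourier_lineDerivOp_eq, smul_apply,
    SchwartzMap.smulLeftCLM_apply_apply ht, inner_smul_left, ← Complex.coe_smul, smul_smul]
  congr 1
  have : (π : ℂ) ≠ 0 := by exact_mod_cast Real.pi_ne_zero
  simp
  field_simp

theorem schwartz_bound2 (g : 𝓢(E × V, F)) (l N : ℕ) :
    ∃ C : ℝ, 0 ≤ C ∧ ∀ x η, ‖x‖ ^ l * ((1 + ‖η‖) ^ N * ‖g (x, η)‖) ≤ C := by
  obtain ⟨C, hC, h⟩ := schwartz_bound g (l + N)
  refine ⟨C, hC, fun x η => le_trans ?_ (h (x, η))⟩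
  have h1 : ‖x‖ ≤ 1 + ‖((x, η) : E × V)‖ := by
    have : ‖x‖ ≤ ‖((x, η) : E × V)‖ := le_max_left _ _
    linarith
  have h2 : ‖η‖ ≤ ‖((x, η) : E × V)‖ := le_max_right _ _
  rw [pow_add, mul_assoc]
  gcongr

/-- Integrable weight. -/
def wgt (V : Type*) [NormedAddCommGroup V] [InnerProductSpace ℝ V] [FiniteDimensional ℝ V]
  [MeasurableSpace V] [BorelSpace V] (η : V) : ℝ :=
  ((1 + ‖η‖) ^ (volume : Measure V).integrablePower)⁻¹

theorem wgt_integrable : Integrable (wgt V) := by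
  have := (volume : Measure V).integrable_pow_neg_integrablePower
  refine this.congr (Filter.Eventually.of_forall fun η => ?_)
  simp only [wgt]
  rw [Real.rpow_neg (by positivity), Real.rpow_natCast]

theorem schwartz_bound3 (g : 𝓢(E × V, F)) (l N : ℕ) :
    ∃ C : ℝ, 0 ≤ C ∧ ∀ x η, ‖x‖ ^ l * ((1 + ‖η‖) ^ N * ‖g (x, η)‖) ≤ C * wgt V η := by
  obtain ⟨C, hC, h⟩ := schwartz_bound2 g l (N + (volume : Measure V).integrablePower)
  refine ⟨C, hC, fun x η => ?_⟩
  unfold wgt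
  rw [← div_eq_mul_inv, le_div_iff₀ (by positivity)]
  refine le_trans (le_of_eq ?_) (h x η)
  rw [pow_add]; ring

theorem pfun_decay_aux (k : ℕ) : ∀ (g : 𝓢(E × V, F)) (l : ℕ),
    ∃ C : ℝ, ∀ p : E × V, ‖p.1‖ ^ l * ‖p.2‖ ^ k * ‖pfun g p‖ ≤ C := by
  induction k with
  | zero =>
    intro g l
    obtain ⟨C, hC, h⟩ := schwartz_bound3 g l 0
    refine ⟨∫ η, C * wgt V η, fun p => ?_⟩
    rw [pow_zero, mul_one]
    have h1 : ‖pfun g p‖ ≤ ∫ η, ‖g (p.1, η)‖ := by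
      refine (norm_integral_le_integral_norm _).trans (le_of_eq ?_)
      refine integral_congr_ae (Filter.Eventually.of_forall fun η => ?_)
      simp only [norm_smul, norm_phase, one_mul]
    calc ‖p.1‖ ^ l * ‖pfun g p‖ ≤ ‖p.1‖ ^ l * ∫ η, ‖g (p.1, η)‖ := by gcongr
      _ = ∫ η, ‖p.1‖ ^ l * ‖g (p.1, η)‖ := by rw [integral_const_mul]
      _ ≤ ∫ η, C * wgt V η := by
        refine integral_mono ?_ (wgt_integrable.const_mul C) fun η => ?_
        · exact ((slice g p.1).integrable (μ := volume)).norm.const_mul _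
        · simpa using h p.1 η
  | succ k ih =>
    intro g l
    let b := stdOrthonormalBasis ℝ V
    choose C hC using fun i => ih (∂_{((0 : E), b i)} g : 𝓢(E × V, F)) l
    refine ⟨∑ i, C i, fun p => ?_⟩
    have h1 : ‖p.2‖ ≤ ∑ i, |⟪p.2, b i⟫_ℝ| := by
      conv_lhs => rw [← b.sum_repr' p.2]
      refine (norm_sum_le _ _).trans (Finset.sum_le_sum fun i _ => ?_)
      rw [norm_smul, b.orthonormal.1, mul_one, real_inner_comm, Real.norm_eq_abs]
    calc ‖p.1‖ ^ l * ‖p.2‖ ^ (k + 1) * ‖pfun g p‖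
        = ‖p.1‖ ^ l * ‖p.2‖ ^ k * (‖p.2‖ * ‖pfun g p‖) := by ring
      _ ≤ ‖p.1‖ ^ l * ‖p.2‖ ^ k * ((∑ i, |⟪p.2, b i⟫_ℝ|) * ‖pfun g p‖) := by gcongr
      _ = ∑ i, ‖p.1‖ ^ l * ‖p.2‖ ^ k * ‖pfun (∂_{((0 : E), b i)} g : 𝓢(E × V, F)) p‖ := by
        rw [Finset.sum_mul, Finset.mul_sum]
        refine Finset.sum_congr rfl fun i _ => ?_
        rw [pfun_lineDeriv, norm_smul]
        simp
      _ ≤ ∑ i, C i := Finset.sum_le_sum fun i _ => hC i p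

theorem pfun_decay (g : 𝓢(E × V, F)) (k : ℕ) : ∃ C : ℝ, ∀ p : E × V, ‖p‖ ^ k * ‖pfun g p‖ ≤ C := by
  obtain ⟨C1, h1⟩ := pfun_decay_aux 0 g k
  obtain ⟨C2, h2⟩ := pfun_decay_aux k g 0
  refine ⟨max C1 C2, fun p => ?_⟩
  rcases le_total ‖p.1‖ ‖p.2‖ with h | h
  · have : ‖p‖ = ‖p.2‖ := by rw [Prod.norm_def, max_eq_right h]
    rw [this]; exact le_max_of_le_right (by simpa using h2 p)
  · have : ‖p‖ = ‖p.1‖ := by rw [Prod.norm_def, max_eq_left h]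
    rw [this]; exact le_max_of_le_left (by simpa using h1 p)

end PartialFourier

section PartialFourier2

open scoped FourierTransform LineDeriv

theorem clm_basis {W F ι : Type*} [NormedAddCommGroup W] [NormedSpace ℝ W] [FiniteDimensional ℝ W]
    [NormedAddCommGroup F] [NormedSpace ℝ F] [Fintype ι] (b : Module.Basis ι ℝ W) (L : W →L[ℝ] F) :
    L = ∑ i, (LinearMap.toContinuousLinearMap (b.coord i)).smulRight (L (b i)) := by
  ext w
  simp only [sum_apply, ContinuousLinearMap.smulRight_apply]
  conv_lhs => rw [← b.sum_repr w, map_sum]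
  simp

variable {E V F : Type*} [NormedAddCommGroup E] [NormedSpace ℝ E]
  [NormedAddCommGroup V] [InnerProductSpace ℝ V] [FiniteDimensional ℝ V]
  [MeasurableSpace V] [BorelSpace V]
  [NormedAddCommGroup F] [NormedSpace ℂ F]

theorem pfun_integrable (g : 𝓢(E × V, F)) (p : E × V) :
    Integrable (fun η : V => Complex.exp (-Complex.I * ((⟪p.2, η⟫_ℝ : ℝ) : ℂ)) • g (p.1, η)) := by
  refine ((slice g p.1).integrable (μ := volume)).mono ?_ ?_
  · refine Continuous.aestronglyMeasurable ?_
    have := g.continuous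
    fun_prop
  · refine Filter.Eventually.of_forall fun η => ?_
    rw [norm_smul, norm_phase, one_mul, slice_apply]

/-- The linear phase as a continuous linear map. -/
def phL (E : Type*) {V : Type*} [NormedAddCommGroup E] [NormedSpace ℝ E]
    [NormedAddCommGroup V] [InnerProductSpace ℝ V] (v : V) : E × V →L[ℝ] ℂ :=
  (-Complex.I) • (Complex.ofRealCLM.comp ((innerSL ℝ v).comp (ContinuousLinearMap.snd ℝ E V)))

theorem phL_apply (v : V) (p : E × V) : phL E v p = -Complex.I * ((⟪v, p.2⟫_ℝ : ℝ) : ℂ) := by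
  simp [phL]

/-- Differentiated symbol. -/
def dG (v : E × V) (g : 𝓢(E × V, F)) : 𝓢(E × V, F) :=
  (∂_{(v.1, (0 : V))} g : 𝓢(E × V, F)) + SchwartzMap.smulLeftCLM F (⇑(phL E v.2)) g

theorem dG_apply (v : E × V) (g : 𝓢(E × V, F)) (p : E × V) :
    dG v g p = fderiv ℝ g p (v.1, 0) + phL E v.2 p • g p := by
  rw [dG, add_apply, SchwartzMap.lineDerivOp_apply_eq_fderiv,
    SchwartzMap.smulLeftCLM_apply_apply (phL E v.2).hasTemperateGrowth]

theorem pfun_hasFDerivAt [FiniteDimensional ℝ E] [CompleteSpace F] {ι : Type*} [Fintype ι]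
    (b : Module.Basis ι ℝ (E × V)) (g : 𝓢(E × V, F)) (p : E × V) :
    HasFDerivAt (pfun g)
      (∑ i, (LinearMap.toContinuousLinearMap (b.coord i)).smulRight (pfun (dG (b i) g) p)) p := by
  let c : ι → (E × V →L[ℝ] ℝ) := fun i => LinearMap.toContinuousLinearMap (b.coord i)
  let K : E × V → V → F := fun p η => Complex.exp (-Complex.I * ((⟪p.2, η⟫_ℝ : ℝ) : ℂ)) • g (p.1, η)
  let K' : E × V → V → (E × V →L[ℝ] F) := fun p η => ∑ i, ContinuousLinearMap.smulRightL ℝ (E × V) F (c i)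
    (Complex.exp (-Complex.I * ((⟪p.2, η⟫_ℝ : ℝ) : ℂ)) • dG (b i) g (p.1, η))
  have hK : ∀ p η, HasFDerivAt (fun p => K p η) (K' p η) p := by
    intro p η
    have h1 : HasFDerivAt (fun p : E × V => Complex.exp (phL E η p))
        (Complex.exp (phL E η p) • phL E η) p := (phL E η).hasFDerivAt.cexp
    have h2 : HasFDerivAt (fun p : E × V => g (p.1, η))
        ((fderiv ℝ g (p.1, η)).comp ((ContinuousLinearMap.inl ℝ E V).comp
          (ContinuousLinearMap.fst ℝ E V))) p := by
      have h3 : HasFDerivAt (fun p : E × V => (p.1, η)) ((ContinuousLinearMap.inl ℝ E V).comp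
          (ContinuousLinearMap.fst ℝ E V)) p :=
        HasFDerivAt.comp (g := fun x : E => (x, η)) p (hasFDerivAt_prodMk_left p.1 η) hasFDerivAt_fst
      exact HasFDerivAt.comp (g := ⇑g) p (g.hasFDerivAt (p.1, η)) h3
    have h4 := h1.smul h2
    have h5 : (fun p : E × V => Complex.exp (phL E η p) • g (p.1, η)) = fun p => K p η := by
      ext p; simp only [K]; rw [phL_apply, real_inner_comm]
    have h6 := clm_basis b (Complex.exp (phL E η p) • ((fderiv ℝ g (p.1, η)).comp
      ((ContinuousLinearMap.inl ℝ E V).comp (ContinuousLinearMap.fst ℝ E V))) +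
        (Complex.exp (phL E η p) • phL E η).smulRight (g (p.1, η)))
    rw [← h5]
    refine h4.congr_fderiv (h6.trans ?_)
    simp only [K']
    refine Finset.sum_congr rfl fun i _ => ?_
    change _ = (c i).smulRight _
    congr 1
    rw [dG_apply, phL_apply]
    simp [phL_apply, smul_smul, real_inner_comm]
  have hK'm : ∀ p, AEStronglyMeasurable (K' p) volume := by
    intro p
    refine Finset.aestronglyMeasurable_fun_sum _ fun i _ => ?_
    exact (ContinuousLinearMap.continuous _).comp_aestronglyMeasurable (pfun_integrable (dG (b i) g) p).1
  choose C hC0 hC using fun i => schwartz_bound3 (dG (b i) g) 0 0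
  have key := hasFDerivAt_integral_of_dominated_of_fderiv_le (𝕜 := ℝ) (μ := (volume : Measure V))
    (F := K) (F' := K') (x₀ := p) (s := Set.univ)
    (bound := fun η => ∑ i, ‖c i‖ * (C i * wgt V η)) Filter.univ_mem
    (Filter.Eventually.of_forall fun q => (pfun_integrable g q).1) (pfun_integrable g p) (hK'm p)
    (Filter.Eventually.of_forall fun η q _ => by
      refine (norm_sum_le _ _).trans (Finset.sum_le_sum fun i _ => ?_)
      change ‖(c i).smulRight _‖ ≤ _
      rw [ContinuousLinearMap.norm_smulRight_apply,
        norm_smul, norm_phase, one_mul]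
      have := hC i q.1 η
      simp only [pow_zero, one_mul] at this
      gcongr)
    (integrable_finsetSum _ fun i _ => ((wgt_integrable.const_mul _).const_mul _))
    (Filter.Eventually.of_forall fun η q _ => hK q η)
  refine key.congr_fderiv ?_
  simp only [K']
  rw [integral_finsetSum]
  · refine Finset.sum_congr rfl fun i _ => ?_
    rw [ContinuousLinearMap.integral_comp_comm _ (pfun_integrable (dG (b i) g) p)]
    rfl
  · intro i _
    exact ContinuousLinearMap.integrable_comp _ (pfun_integrable (dG (b i) g) p)

theorem exists_PF [FiniteDimensional ℝ E] [CompleteSpace F] (g : 𝓢(E × V, F)) :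
    ∃ s : 𝓢(E × V, F), ⇑s = pfun g := by
  let b := Module.finBasis ℝ (E × V)
  refine closed_class_schwartz (fun i => LinearMap.toContinuousLinearMap (b.coord i))
    {u | ∃ g : 𝓢(E × V, F), u = pfun g} ?_ ?_ _ ⟨g, rfl⟩
  · rintro _ ⟨g, rfl⟩
    exact ⟨fun i => pfun (dG (b i) g), fun i => ⟨_, rfl⟩, fun x => pfun_hasFDerivAt b g x⟩
  · rintro _ ⟨g, rfl⟩ k
    exact pfun_decay g k

/-- Partial Fourier transform of Schwartz functions. -/
def PF [FiniteDimensional ℝ E] [CompleteSpace F] (g : 𝓢(E × V, F)) : 𝓢(E × V, F) :=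
  (exists_PF g).choose

theorem PF_coe [FiniteDimensional ℝ E] [CompleteSpace F] (g : 𝓢(E × V, F)) : ⇑(PF g) = pfun g :=
  (exists_PF g).choose_spec

theorem PF_apply [FiniteDimensional ℝ E] [CompleteSpace F] (g : 𝓢(E × V, F)) (p : E × V) :
    PF g p = ∫ η : V, Complex.exp (-Complex.I * ((⟪p.2, η⟫_ℝ : ℝ) : ℂ)) • g (p.1, η) := by
  rw [PF_coe]; rfl

/-- Fourier inversion for the partial Fourier transform. -/
theorem PF_PF [FiniteDimensional ℝ E] [CompleteSpace F] (g : 𝓢(E × V, F)) (x : E) (η : V) :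
    PF (PF g) (x, η) = ((2 * π) ^ Module.finrank ℝ V : ℝ) • g (x, -η) := by
  have hpi : (0 : ℝ) < 2 * π := by positivity
  have h1 : 𝓕⁻ (𝓕 (slice g x)) (-η) = slice g x (-η) := by
    rw [FourierTransform.fourierInv_fourier_eq]
  rw [SchwartzMap.fourierInv_coe, Real.fourierInv_eq'] at h1
  rw [slice_apply] at h1
  rw [← h1, PF_apply]
  have h2 := Measure.integral_comp_smul (volume : Measure V)
    (fun v => Complex.exp ((2 * π * ⟪v, -η⟫_ℝ : ℝ) * Complex.I) • 𝓕 (slice g x) v) (2 * π)⁻¹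
  have h3 : |((2 * π)⁻¹ ^ Module.finrank ℝ V)⁻¹| = (2 * π) ^ Module.finrank ℝ V := by
    rw [inv_pow, inv_inv, abs_of_pos (by positivity)]
  rw [h3] at h2
  rw [← h2]
  refine integral_congr_ae (Filter.Eventually.of_forall fun v => ?_)
  simp only
  rw [PF_coe, pfun_eq_fourier]
  congr 2
  rw [inner_smul_left, inner_neg_right, real_inner_comm]
  push_cast
  have : (π : ℂ) ≠ 0 := by exact_mod_cast Real.pi_ne_zero
  simp
  field_simp

/-- The partial Fourier transform commutes with linear maps. -/
theorem PF_postcomp [FiniteDimensional ℝ E] [CompleteSpace F] {G : Type*} [NormedAddCommGroup G]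
    [NormedSpace ℂ G] [CompleteSpace G] (L : F →L[ℂ] G) (g : 𝓢(E × V, F)) (h : 𝓢(E × V, G))
    (hgh : ∀ p, h p = L (g p)) (p : E × V) : PF h p = L (PF g p) := by
  rw [PF_apply, PF_apply, ← ContinuousLinearMap.integral_comp_comm L (pfun_integrable g p)]
  refine integral_congr_ae (Filter.Eventually.of_forall fun v => ?_)
  simp only [hgh, map_smul]

end PartialFourier2

section Tools

open scoped ContDiff

theorem exists_pull {W W' F : Type*} [NormedAddCommGroup W] [NormedSpace ℝ W]
    [NormedAddCommGroup W'] [NormedSpace ℝ W'] [FiniteDimensional ℝ W']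
    [NormedAddCommGroup F] [NormedSpace ℝ F] (L : W' →L[ℝ] W) (hL : Function.Injective L)
    (s : 𝓢(W, F)) : ∃ t : 𝓢(W', F), ∀ x, t x = s (L x) := by
  obtain ⟨K, -, hK⟩ := LinearMap.exists_antilipschitzWith (L : W' →ₗ[ℝ] W)
    (LinearMap.ker_eq_bot.2 hL)
  exact ⟨SchwartzMap.compCLMOfAntilipschitz ℝ (g := ⇑L) L.hasTemperateGrowth hK s, fun x => rfl⟩

theorem norm_iteratedFDeriv_comp_fst_le {W W' F : Type*} [NormedAddCommGroup W] [NormedSpace ℝ W]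
    [NormedAddCommGroup W'] [NormedSpace ℝ W']
    [NormedAddCommGroup F] [NormedSpace ℝ F] (f : 𝓢(W, F)) (L : W' →L[ℝ] W) (hL : ‖L‖ ≤ 1)
    (n : ℕ) (x : W') :
    ‖iteratedFDeriv ℝ n (fun y => f (L y)) x‖ ≤ ‖iteratedFDeriv ℝ n f (L x)‖ := by
  have h := L.iteratedFDeriv_comp_right (f := ⇑f) (n := ∞) (f.smooth ⊤) x (i := n) (by exact_mod_cast le_top)
  have h2 : (fun y => f (L y)) = (⇑f ∘ ⇑L) := rfl
  rw [h2, h]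
  refine (ContinuousMultilinearMap.norm_compContinuousLinearMap_le _ _).trans ?_
  refine mul_le_of_le_one_right (norm_nonneg _) ?_
  exact Finset.prod_le_one (fun _ _ => norm_nonneg _) (fun _ _ => hL)

theorem exists_outer {W1 W2 F1 F2 F3 : Type*} [NormedAddCommGroup W1] [NormedSpace ℝ W1]
    [NormedAddCommGroup W2] [NormedSpace ℝ W2] [NormedAddCommGroup F1] [NormedSpace ℝ F1]
    [NormedAddCommGroup F2] [NormedSpace ℝ F2] [NormedAddCommGroup F3] [NormedSpace ℝ F3]
    (B : F1 →L[ℝ] F2 →L[ℝ] F3) (f : 𝓢(W1, F1)) (g : 𝓢(W2, F2)) :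
    ∃ t : 𝓢(W1 × W2, F3), ∀ p, t p = B (f p.1) (g p.2) := by
  have hf : ContDiff ℝ ∞ (fun p : W1 × W2 => f p.1) := (f.smooth ⊤).comp contDiff_fst
  have hg : ContDiff ℝ ∞ (fun p : W1 × W2 => g p.2) := (g.smooth ⊤).comp contDiff_snd
  refine ⟨⟨fun p => B (f p.1) (g p.2), ?_, ?_⟩, fun p => rfl⟩
  · exact B.isBoundedBilinearMap.contDiff.comp (hf.prodMk hg)
  · intro k n
    let sf : ℕ → ℕ → ℝ := fun k n => SchwartzMap.seminorm ℝ k n f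
    let sg : ℕ → ℕ → ℝ := fun k n => SchwartzMap.seminorm ℝ k n g
    refine ⟨‖B‖ * ∑ i ∈ Finset.range (n + 1), (n.choose i : ℝ) *
      (sf k i * sg 0 (n - i) + sf 0 i * sg k (n - i)), fun p => ?_⟩
    have h1 := B.norm_iteratedFDeriv_le_of_bilinear hf hg p (n := n) (by exact_mod_cast le_top)
    calc _ ≤ ‖p‖ ^ k * (‖B‖ * ∑ i ∈ Finset.range (n + 1),
      (n.choose i : ℝ) * ‖iteratedFDeriv ℝ i (fun p : W1 × W2 => f p.1) p‖ *
        ‖iteratedFDeriv ℝ (n - i) (fun p : W1 × W2 => g p.2) p‖) := by gcongr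
      _ = ‖B‖ * ∑ i ∈ Finset.range (n + 1), (n.choose i : ℝ) *
        (‖p‖ ^ k * (‖iteratedFDeriv ℝ i (fun p : W1 × W2 => f p.1) p‖ *
        ‖iteratedFDeriv ℝ (n - i) (fun p : W1 × W2 => g p.2) p‖)) := by
          rw [mul_left_comm, Finset.mul_sum]; congr 1
          refine Finset.sum_congr rfl fun i _ => ?_
          ring
      _ ≤ _ := by
        gcongr with i hi
        have a1 := norm_iteratedFDeriv_comp_fst_le f (ContinuousLinearMap.fst ℝ W1 W2)
          (ContinuousLinearMap.norm_fst_le ℝ W1 W2) i p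
        have a2 := norm_iteratedFDeriv_comp_fst_le g (ContinuousLinearMap.snd ℝ W1 W2)
          (ContinuousLinearMap.norm_snd_le ℝ W1 W2) (n - i) p
        simp only [ContinuousLinearMap.coe_fst', ContinuousLinearMap.coe_snd'] at a1 a2
        have b1 := SchwartzMap.le_seminorm ℝ k i f p.1
        have b2 := SchwartzMap.le_seminorm ℝ 0 i f p.1
        have b3 := SchwartzMap.le_seminorm ℝ k (n - i) g p.2
        have b4 := SchwartzMap.le_seminorm ℝ 0 (n - i) g p.2
        rw [pow_zero, one_mul] at b2 b4
        have hsf : ∀ k n, 0 ≤ sf k n := fun _ _ => apply_nonneg _ _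
        have hsg : ∀ k n, 0 ≤ sg k n := fun _ _ => apply_nonneg _ _
        have hp : ‖p‖ ^ k ≤ ‖p.1‖ ^ k + ‖p.2‖ ^ k := by
          rw [Prod.norm_def]
          rcases max_choice ‖p.1‖ ‖p.2‖ with h | h <;> rw [h]
          · linarith [pow_nonneg (norm_nonneg p.2) k]
          · linarith [pow_nonneg (norm_nonneg p.1) k]
        calc _ ≤ (‖p.1‖ ^ k + ‖p.2‖ ^ k) * (‖iteratedFDeriv ℝ i f p.1‖ *
              ‖iteratedFDeriv ℝ (n - i) g p.2‖) := by gcongr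
          _ = (‖p.1‖ ^ k * ‖iteratedFDeriv ℝ i f p.1‖) * ‖iteratedFDeriv ℝ (n - i) g p.2‖
              + ‖iteratedFDeriv ℝ i f p.1‖ * (‖p.2‖ ^ k * ‖iteratedFDeriv ℝ (n - i) g p.2‖) := by
            ring
          _ ≤ sf k i * sg 0 (n - i) + sf 0 i * sg k (n - i) := by
            have := hsf k i
            have := hsf 0 i
            gcongr

theorem exists_partialInt {E V F : Type*} [NormedAddCommGroup E] [NormedSpace ℝ E]
    [FiniteDimensional ℝ E]
    [NormedAddCommGroup V] [InnerProductSpace ℝ V] [FiniteDimensional ℝ V]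
    [MeasurableSpace V] [BorelSpace V] [NormedAddCommGroup F] [NormedSpace ℂ F] [CompleteSpace F]
    (G : 𝓢(E × V, F)) : ∃ t : 𝓢(E, F), ∀ x, t x = ∫ u, G (x, u) := by
  obtain ⟨t, ht⟩ := exists_pull (ContinuousLinearMap.inl ℝ E V) (fun x y h => by simpa using h) (PF G)
  refine ⟨t, fun x => ?_⟩
  rw [ht, PF_apply]
  simp

theorem temperate_exp : (fun t : ℝ => Complex.exp (-Complex.I * (t : ℂ))).HasTemperateGrowth := by
  refine closed_class_temperate (ι := Unit) (fun _ => ContinuousLinearMap.id ℝ ℝ)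
    {u | ∃ c : ℂ, u = fun t : ℝ => c * Complex.exp (-Complex.I * (t : ℂ))} ?_ ?_ _ ⟨1, by simp⟩
  · rintro _ ⟨c, rfl⟩
    refine ⟨fun _ t => (c * -Complex.I) * Complex.exp (-Complex.I * (t : ℂ)),
      fun _ => ⟨_, rfl⟩, fun t => ?_⟩
    have h1 : HasDerivAt (fun t : ℝ => c * Complex.exp (-Complex.I * (t : ℂ)))
        (c * (Complex.exp (-Complex.I * (t : ℂ)) * (-Complex.I * 1))) t :=
      (((Complex.ofRealCLM.hasDerivAt (x := t)).const_mul (-Complex.I)).cexp).const_mul c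
    refine h1.hasFDerivAt.congr_fderiv ?_
    ext
    simp; ring
  · rintro _ ⟨c, rfl⟩
    refine ⟨0, ‖c‖, fun t => ?_⟩
    rw [norm_mul, norm_phase]; simp

theorem temperate_fderiv {W F : Type*} [NormedAddCommGroup W] [NormedSpace ℝ W]
    [NormedAddCommGroup F] [NormedSpace ℝ F] {h : W → F} (hh : h.HasTemperateGrowth) :
    (fderiv ℝ h).HasTemperateGrowth := by
  refine ⟨hh.1.fderiv_right (by simp), fun n => ?_⟩
  obtain ⟨k, C, hC⟩ := hh.2 (n + 1)
  exact ⟨k, C, fun x => by rw [norm_iteratedFDeriv_fderiv]; exact hC x⟩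

theorem temperate_fderiv_apply {W F : Type*} [NormedAddCommGroup W] [NormedSpace ℝ W]
    [NormedAddCommGroup F] [NormedSpace ℝ F] {h : W → F} (hh : h.HasTemperateGrowth) (v : W) :
    (fun p => fderiv ℝ h p v).HasTemperateGrowth :=
  (ContinuousLinearMap.apply ℝ F v).hasTemperateGrowth.comp (temperate_fderiv hh)

theorem temperate_bound {W F : Type*} [NormedAddCommGroup W] [NormedSpace ℝ W]
    [NormedAddCommGroup F] [NormedSpace ℝ F] {h : W → F} (hh : h.HasTemperateGrowth) :
    ∃ (k : ℕ) (C : ℝ), 0 ≤ C ∧ ∀ x, ‖h x‖ ≤ C * (1 + ‖x‖) ^ k := by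
  obtain ⟨k, C, hC⟩ := hh.2 0
  refine ⟨k, C, ?_, fun x => by simpa using hC x⟩
  have := (norm_nonneg _).trans (hC 0)
  simpa using this

theorem temperate_integral {W : Type*} [NormedAddCommGroup W] [NormedSpace ℝ W]
    [FiniteDimensional ℝ W] {h : ℝ × W → ℝ} (hh : h.HasTemperateGrowth) :
    (fun w => ∫ s in (0:ℝ)..1, h (s, w)).HasTemperateGrowth := by
  let b := Module.finBasis ℝ W
  let c := fun i => LinearMap.toContinuousLinearMap (b.coord i)
  have hI : ∀ s : ℝ, s ∈ Set.uIoc (0:ℝ) 1 → |s| ≤ 1 := by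
    intro s hs
    rw [Set.uIoc_of_le zero_le_one] at hs
    rw [abs_of_pos hs.1]; exact hs.2
  have hpb : ∀ (s : ℝ) (w : W), |s| ≤ 1 → 1 + ‖((s, w) : ℝ × W)‖ ≤ 2 + ‖w‖ := by
    intro s w hs
    rw [Prod.norm_def]
    have := max_le (show ‖s‖ ≤ 1 + ‖w‖ by rw [Real.norm_eq_abs]; linarith [norm_nonneg w])
      (show ‖w‖ ≤ 1 + ‖w‖ by linarith)
    simp only at this ⊢
    linarith
  refine closed_class_temperate c
    {u | ∃ h : ℝ × W → ℝ, h.HasTemperateGrowth ∧ u = fun w => ∫ s in (0:ℝ)..1, h (s, w)}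
    ?_ ?_ _ ⟨h, hh, rfl⟩
  · rintro _ ⟨h, hh, rfl⟩
    have hcont : Continuous h := hh.1.continuous
    have hD := fun i => temperate_fderiv_apply hh ((0 : ℝ), b i)
    refine ⟨fun i w => ∫ s in (0:ℝ)..1, fderiv ℝ h (s, w) (0, b i),
      fun i => ⟨_, hD i, rfl⟩, fun w => ?_⟩
    let K' : W → ℝ → (W →L[ℝ] ℝ) := fun w s =>
      ∑ i, ContinuousLinearMap.smulRightL ℝ W ℝ (c i) (fderiv ℝ h (s, w) (0, b i))
    have hK : ∀ w s, HasFDerivAt (fun w => h (s, w)) (K' w s) w := by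
      intro w s
      have h2 : HasFDerivAt (fun w => h (s, w)) ((fderiv ℝ h (s, w)).comp
          (ContinuousLinearMap.inr ℝ ℝ W)) w :=
        HasFDerivAt.comp (g := h) w ((hh.1.differentiable (by simp)) (s, w)).hasFDerivAt
          (hasFDerivAt_prodMk_right s w)
      refine h2.congr_fderiv ((clm_basis b _).trans ?_)
      rfl
    have hcD : ∀ i, Continuous (fun p : ℝ × W => fderiv ℝ h p (0, b i)) :=
      fun i => (hD i).1.continuous
    have hcK' : Continuous (K' w) := by
      refine continuous_finset_sum _ fun i _ => ?_
      exact (ContinuousLinearMap.continuous _).comp ((hcD i).comp (by fun_prop))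
    choose k C hC0 hC using fun i => temperate_bound (hD i)
    have key := intervalIntegral.hasFDerivAt_integral_of_dominated_of_fderiv_le (𝕜 := ℝ)
      (μ := volume) (a := 0) (b := 1) (F := fun w s => h (s, w)) (F' := K') (x₀ := w)
      (s := Metric.ball w 1) (bound := fun _ => ∑ i, ‖c i‖ * (C i * (3 + ‖w‖) ^ k i))
      (Metric.ball_mem_nhds w one_pos)
      (Filter.Eventually.of_forall fun w => Continuous.aestronglyMeasurable (by fun_prop))
      (Continuous.intervalIntegrable (by fun_prop) _ _)
      hcK'.aestronglyMeasurable
      (Filter.Eventually.of_forall fun s hs w' hw' => by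
        refine (norm_sum_le _ _).trans (Finset.sum_le_sum fun i _ => ?_)
        change ‖(c i).smulRight _‖ ≤ _
        rw [ContinuousLinearMap.norm_smulRight_apply]
        have h3 := hC i (s, w')
        have h4 := hpb s w' (hI s hs)
        have h5 : ‖w'‖ ≤ ‖w‖ + 1 := by
          have : ‖w' - w‖ < 1 := by simpa [dist_eq_norm] using hw'
          have := norm_le_norm_add_norm_sub' w' w
          linarith
        refine mul_le_mul_of_nonneg_left (h3.trans ?_) (norm_nonneg _)
        exact mul_le_mul_of_nonneg_left (pow_le_pow_left₀ (by positivity) (by linarith) _) (hC0 i))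
      (by simp)
      (Filter.Eventually.of_forall fun s _ w _ => hK w s)
    refine key.congr_fderiv ?_
    have hIntg : ∀ i, IntervalIntegrable (fun s => fderiv ℝ h (s, w) (0, b i)) volume 0 1 :=
      fun i => Continuous.intervalIntegrable ((hcD i).comp (by fun_prop)) _ _
    simp only [K']
    rw [intervalIntegral.integral_finsetSum]
    · refine Finset.sum_congr rfl fun i _ => ?_
      rw [ContinuousLinearMap.intervalIntegral_comp_comm _ (hIntg i)]
      rfl
    · intro i _
      exact Continuous.intervalIntegrable ((ContinuousLinearMap.continuous _).comp
        ((hcD i).comp (by fun_prop))) _ _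
  · rintro _ ⟨h, hh, rfl⟩
    obtain ⟨k, C, hC0, hC⟩ := temperate_bound hh
    refine ⟨k, C * 2 ^ k, fun w => ?_⟩
    have := intervalIntegral.norm_integral_le_of_norm_le_const (a := 0) (b := 1)
      (f := fun s => h (s, w)) (C := C * (2 ^ k * (1 + ‖w‖) ^ k)) (fun s hs => by
        refine (hC (s, w)).trans ?_
        rw [← mul_pow]
        have := hpb s w (hI s hs)
        gcongr
        linarith [norm_nonneg w])
    refine this.trans (le_of_eq ?_)
    simp; ring

theorem IsPolyVF.temperate {d : ℕ} {A : Ed d → Ed d} (hA : IsPolyVF A) : A.HasTemperateGrowth := by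
  refine ⟨hA.1, fun n => ?_⟩
  obtain ⟨C, k, h⟩ := hA.2 n
  exact ⟨k, C, h⟩

theorem lineInt_temperate {d : ℕ} {A : Ed d → Ed d} (hA : IsPolyVF A) :
    (fun w : Ed d × Ed d => lineInt A w.1 w.2).HasTemperateGrowth := by
  refine temperate_integral (h := fun p : ℝ × (Ed d × Ed d) =>
    ⟪A (p.2.1 + p.1 • (p.2.2 - p.2.1)), p.2.2 - p.2.1⟫_ℝ) ?_
  have h1 : (fun p : ℝ × (Ed d × Ed d) => p.1).HasTemperateGrowth :=
    (ContinuousLinearMap.fst ℝ ℝ (Ed d × Ed d)).hasTemperateGrowth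
  have h2 : (fun p : ℝ × (Ed d × Ed d) => p.2.1).HasTemperateGrowth :=
    ((ContinuousLinearMap.fst ℝ (Ed d) (Ed d)).comp
      (ContinuousLinearMap.snd ℝ ℝ (Ed d × Ed d))).hasTemperateGrowth
  have h3 : (fun p : ℝ × (Ed d × Ed d) => p.2.2).HasTemperateGrowth :=
    ((ContinuousLinearMap.snd ℝ (Ed d) (Ed d)).comp
      (ContinuousLinearMap.snd ℝ ℝ (Ed d × Ed d))).hasTemperateGrowth
  have h4 : (fun p : ℝ × (Ed d × Ed d) => A (p.2.1 + p.1 • (p.2.2 - p.2.1))).HasTemperateGrowth :=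
    hA.temperate.comp (h2.add (h1.smul (h3.sub h2)))
  exact ContinuousLinearMap.bilinear_hasTemperateGrowth (𝕜 := ℝ) (innerSL ℝ) h4 (h3.sub h2)

theorem lineInt_self {d : ℕ} (A : Ed d → Ed d) (x : Ed d) : lineInt A x x = 0 := by
  simp [lineInt]

theorem lineInt_symm {d : ℕ} (A : Ed d → Ed d) (x y : Ed d) :
    lineInt A y x = - lineInt A x y := by
  unfold lineInt
  have h := intervalIntegral.integral_comp_sub_left
    (fun s => ⟪A (y + s • (x - y)), x - y⟫_ℝ) (a := 0) (b := 1) 1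
  simp only [sub_zero, sub_self] at h
  rw [← h, ← intervalIntegral.integral_neg]
  refine intervalIntegral.integral_congr fun s _ => ?_
  rw [show y + (1 - s) • (x - y) = x + s • (y - x) by module, ← inner_neg_right, neg_sub]

end Tools

section Lift

open scoped LineDeriv ContDiff

variable {H H' : Type*} [NormedAddCommGroup H] [InnerProductSpace ℂ H]
  [NormedAddCommGroup H'] [InnerProductSpace ℂ H']

theorem exists_phase (z : ℂ) : ∃ c : ℂ, ‖c‖ = 1 ∧ c * z = (‖z‖ : ℂ) := by
  by_cases hz : z = 0
  · exact ⟨1, by simp, by simp [hz]⟩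
  · have hz' : (‖z‖ : ℂ) ≠ 0 := by simpa using hz
    refine ⟨(starRingEnd ℂ) (z / ‖z‖), by simp [hz], ?_⟩
    rw [map_div₀, Complex.conj_ofReal, div_mul_eq_mul_div, mul_comm, Complex.mul_conj,
      Complex.normSq_eq_norm_sq]
    push_cast
    field_simp

/-- Mean value inequality in trace norm. -/
theorem L1.mvt {W : Type*} [NormedAddCommGroup W] [NormedSpace ℝ W] (u : W → L1 H H')
    (u' : W → W →L[ℝ] L1 H H') (φ : W →L[ℝ] L1 H H') {s : Set W} (hs : Convex ℝ s) {C : ℝ}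
    (hu : ∀ y ∈ s, HasFDerivAt (fun y => L1.incl H H' (u y))
      (((L1.incl H H').restrictScalars ℝ).comp (u' y)) y)
    (hC : ∀ y ∈ s, ‖u' y - φ‖ ≤ C) {x y : W} (hx : x ∈ s) (hy : y ∈ s) :
    ‖u y - u x - φ (y - x)‖ ≤ C * ‖y - x‖ := by
  have hC0 : 0 ≤ C := (norm_nonneg _).trans (hC x hx)
  refine L1.norm_le_of_sum (by positivity) fun n e v he hv => ?_
  choose c hc1 hc2 using fun i => exists_phase (⟪v i, (u y - u x - φ (y - x)).1 (e i)⟫_ℂ)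
  let ψ : (H →L[ℂ] H') →L[ℂ] ℂ := ∑ i, c i • ((innerSL ℂ (v i)).comp
    (ContinuousLinearMap.apply ℂ H' (e i)))
  have hψ : ∀ T : H →L[ℂ] H', ψ T = ∑ i, c i * ⟪v i, T (e i)⟫_ℂ := by
    intro T; simp [ψ, sum_apply]
  have hψn : ∀ T : L1 H H', ‖ψ T.1‖ ≤ ‖T‖ := by
    intro T
    rw [hψ]
    refine (norm_sum_le _ _).trans (le_trans (le_of_eq ?_) (L1.sum_le T he hv))
    refine Finset.sum_congr rfl fun i _ => ?_
    rw [norm_mul, hc1, one_mul]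
  let Ψ : L1 H H' →L[ℝ] ℂ := (ψ.restrictScalars ℝ).comp ((L1.incl H H').restrictScalars ℝ)
  have hΨ : ∀ T, ‖Ψ T‖ ≤ ‖T‖ := hψn
  have key := Convex.norm_image_sub_le_of_norm_hasFDerivWithin_le' (𝕜 := ℝ)
    (f := fun y => Ψ (u y)) (f' := fun y => Ψ.comp (u' y)) (φ := Ψ.comp φ) (C := C) (s := s)
    (x := x) (y := y)
    (fun y hy => (HasFDerivAt.comp (g := fun T => ψ T) y
      ((ψ.restrictScalars ℝ).hasFDerivAt) (hu y hy)).hasFDerivWithinAt)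
    (fun y hy => by
      rw [← ContinuousLinearMap.comp_sub]
      refine ContinuousLinearMap.opNorm_le_bound _ hC0 fun w => ?_
      refine (hΨ _).trans ?_
      exact ((u' y - φ).le_opNorm w).trans (by gcongr; exact hC y hy)) hs hx hy
  refine le_trans (le_of_eq ?_) key
  have h1 : Ψ (u y) - Ψ (u x) - (Ψ.comp φ) (y - x) = Ψ (u y - u x - φ (y - x)) := by
    simp only [map_sub, ContinuousLinearMap.comp_apply]
  rw [h1]
  have h2 : Ψ (u y - u x - φ (y - x)) = ψ (u y - u x - φ (y - x)).1 := rfl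
  rw [h2, hψ]
  have h3 : ∑ i, c i * ⟪v i, (u y - u x - φ (y - x)).1 (e i)⟫_ℂ
      = ((∑ i, ‖⟪v i, (u y - u x - φ (y - x)).1 (e i)⟫_ℂ‖ : ℝ) : ℂ) := by
    push_cast
    exact Finset.sum_congr rfl fun i _ => hc2 i
  rw [h3, Complex.norm_of_nonneg (Finset.sum_nonneg fun i _ => norm_nonneg _)]

theorem L1.lift_deriv {W ι : Type*} [NormedAddCommGroup W] [NormedSpace ℝ W] [Fintype ι]
    (c : ι → W →L[ℝ] ℝ) (u : W → L1 H H') (D : ι → W → L1 H H') (D2 : ι → ι → W → L1 H H')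
    (hu : ∀ x, HasFDerivAt (fun y => L1.incl H H' (u y))
      (∑ i, (c i).smulRight (L1.incl H H' (D i x))) x)
    (hD : ∀ i x, HasFDerivAt (fun y => L1.incl H H' (D i y))
      (∑ j, (c j).smulRight (L1.incl H H' (D2 i j x))) x)
    {C : ℝ} (hC : ∀ i j x, ‖D2 i j x‖ ≤ C) (x : W) :
    HasFDerivAt u (∑ i, (c i).smulRight (D i x)) x := by
  have hcomp : ∀ (D : ι → W → L1 H H') (x : W), ((L1.incl H H').restrictScalars ℝ).comp
      (∑ i, (c i).smulRight (D i x)) = ∑ i, (c i).smulRight (L1.incl H H' (D i x)) := by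
    intro D x
    ext1 w
    simp only [ContinuousLinearMap.comp_apply, sum_apply, ContinuousLinearMap.smulRight_apply,
      map_sum, map_smul]
    rfl
  have hlip : ∀ i x y, ‖D i y - D i x‖ ≤ (∑ j, ‖c j‖ * C) * ‖y - x‖ := by
    intro i x y
    have := L1.mvt (D i) (fun x => ∑ j, (c j).smulRight (D2 i j x)) 0 (s := Set.univ) convex_univ
      (C := ∑ j, ‖c j‖ * C) (fun y _ => by rw [hcomp]; exact hD i y)
      (fun y _ => by
        rw [sub_zero]
        refine (norm_sum_le _ _).trans (Finset.sum_le_sum fun j _ => ?_)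
        rw [ContinuousLinearMap.norm_smulRight_apply]
        exact mul_le_mul_of_nonneg_left (hC i j y) (norm_nonneg _)) (Set.mem_univ x) (Set.mem_univ y)
    simpa using this
  let K := ∑ i, ‖c i‖ * (∑ j, ‖c j‖ * C)
  let φ := ∑ i, (c i).smulRight (D i x)
  have h2 : ∀ y, ‖u y - u x - φ (y - x)‖ ≤ K * ‖y - x‖ ^ 2 := by
    intro y
    have := L1.mvt u (fun x => ∑ i, (c i).smulRight (D i x)) φ
      (s := Metric.closedBall x ‖y - x‖) (convex_closedBall _ _)
      (C := K * ‖y - x‖) (fun y _ => by rw [hcomp]; exact hu y)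
      (fun z hz => by
        rw [← Finset.sum_sub_distrib, Finset.sum_mul]
        refine (norm_sum_le _ _).trans (Finset.sum_le_sum fun j _ => ?_)
        have h3 : (c j).smulRight (D j z) - (c j).smulRight (D j x)
            = (c j).smulRight (D j z - D j x) := by
          ext1 w; simp [smul_sub]
        rw [h3, ContinuousLinearMap.norm_smulRight_apply, mul_assoc]
        refine mul_le_mul_of_nonneg_left ((hlip j x z).trans ?_) (norm_nonneg _)
        have h4 : ‖z - x‖ ≤ ‖y - x‖ := by simpa [dist_eq_norm] using hz
        have h5 : 0 ≤ C := (norm_nonneg _).trans (hC j j x)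
        have h6 : 0 ≤ ∑ j, ‖c j‖ * C := Finset.sum_nonneg fun j _ => by positivity
        gcongr) (x := x) (y := y) (by simp) (by simp [dist_eq_norm])
    refine this.trans (le_of_eq (by ring))
  have h3 : HasFDerivAt (fun y => u y - u x - φ (y - x)) (0 : W →L[ℝ] L1 H H') x := by
    refine Asymptotics.IsBigO.hasFDerivAt (n := 2) ?_ one_lt_two
    refine Asymptotics.IsBigO.of_bound K (Filter.Eventually.of_forall fun y => ?_)
    rw [norm_pow, norm_norm]
    exact h2 y
  have h4 : HasFDerivAt (fun y => φ (y - x)) φ x := by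
    have h6 := (φ.hasFDerivAt (x := x)).sub_const (φ x)
    simpa only [map_sub] using h6
  have h5 := (h3.add h4).add_const (u x)
  rw [zero_add] at h5
  refine h5.congr_of_eventuallyEq (Filter.Eventually.of_forall fun y => ?_)
  simp

/-- Iterated derivative of a Schwartz function as a Schwartz function. -/
def mS {d : ℕ} {F : Type*} [NormedAddCommGroup F] [NormedSpace ℝ F] (a α : List (Fin d))
    (f : 𝓢(Ed d × Ed d, F)) : 𝓢(Ed d × Ed d, F) :=
  (mkDirs a α).foldr (fun v s => ∂_{v} s) f

theorem mS_coe {d : ℕ} {F : Type*} [NormedAddCommGroup F] [NormedSpace ℝ F] (a α : List (Fin d))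
    (f : 𝓢(Ed d × Ed d, F)) : ⇑(mS a α f) = mDeriv a α f := by
  unfold mS mDeriv
  induction mkDirs a α with
  | nil => rfl
  | cons v l ih =>
    ext p
    simp only [List.foldr_cons]
    rw [SchwartzMap.lineDerivOp_apply_eq_fderiv, ih]
    rfl

theorem lineDeriv_comm {W F : Type*} [NormedAddCommGroup W] [NormedSpace ℝ W]
    [NormedAddCommGroup F] [NormedSpace ℝ F] (v w : W) (f : 𝓢(W, F)) :
    (∂_{v} (∂_{w} f : 𝓢(W, F)) : 𝓢(W, F)) = ∂_{w} (∂_{v} f : 𝓢(W, F)) := by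
  ext x
  have h : ∀ v w : W, (∂_{v} (∂_{w} f : 𝓢(W, F)) : 𝓢(W, F)) x = fderiv ℝ (fderiv ℝ f) x v w := by
    intro v w
    rw [SchwartzMap.lineDerivOp_apply_eq_fderiv]
    have h1 : ⇑(∂_{w} f : 𝓢(W, F)) = fun p => fderiv ℝ f p w := by
      ext p; rw [SchwartzMap.lineDerivOp_apply_eq_fderiv]
    have h2 : DifferentiableAt ℝ (fderiv ℝ f) x :=
      (((f.smooth ⊤).fderiv_right (m := ∞) (by simp)).differentiable (by simp)) x
    rw [h1, fderiv_clm_apply h2 (differentiableAt_const w)]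
    simp
  rw [h, h]
  have hs : IsSymmSndFDerivAt ℝ f x :=
    (f.smooth ⊤).contDiffAt.isSymmSndFDerivAt (by simp only [minSmoothness_of_isRCLikeNormedField]; exact WithTop.coe_le_coe.2 (le_top : (2 : ℕ∞) ≤ ⊤))
  exact hs v w

theorem mS_pos {d : ℕ} {F : Type*} [NormedAddCommGroup F] [NormedSpace ℝ F] (a α : List (Fin d))
    (f : 𝓢(Ed d × Ed d, F)) (j : Fin d) :
    (∂_{((EuclideanSpace.single j (1:ℝ) : Ed d), (0 : Ed d))} (mS a α f) : 𝓢(Ed d × Ed d, F))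
      = mS (j :: a) α f := rfl

theorem mS_mom {d : ℕ} {F : Type*} [NormedAddCommGroup F] [NormedSpace ℝ F] (a α : List (Fin d))
    (f : 𝓢(Ed d × Ed d, F)) (j : Fin d) :
    (∂_{((0 : Ed d), (EuclideanSpace.single j (1:ℝ) : Ed d))} (mS a α f) : 𝓢(Ed d × Ed d, F))
      = mS a (j :: α) f := by
  induction a with
  | nil => rfl
  | cons i a ih => rw [← mS_pos, ← mS_pos, lineDeriv_comm, ih]

/-- The standard basis of phase space. -/
def psB (d : ℕ) : Module.Basis (Fin d ⊕ Fin d) ℝ (Ed d × Ed d) :=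
  (EuclideanSpace.basisFun (Fin d) ℝ).toBasis.prod (EuclideanSpace.basisFun (Fin d) ℝ).toBasis

/-- Extend the multi-indices in the direction of a basis vector. -/
def ext1 {d : ℕ} (i : Fin d ⊕ Fin d) (p : List (Fin d) × List (Fin d)) :
    List (Fin d) × List (Fin d) :=
  match i with
  | .inl j => (j :: p.1, p.2)
  | .inr j => (p.1, j :: p.2)

theorem mS_ext1 {d : ℕ} {F : Type*} [NormedAddCommGroup F] [NormedSpace ℝ F]
    (p : List (Fin d) × List (Fin d)) (f : 𝓢(Ed d × Ed d, F)) (i : Fin d ⊕ Fin d) :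
    (∂_{psB d i} (mS p.1 p.2 f) : 𝓢(Ed d × Ed d, F)) = mS (ext1 i p).1 (ext1 i p).2 f := by
  rcases i with j | j
  · have : psB d (.inl j) = ((EuclideanSpace.single j (1:ℝ) : Ed d), (0 : Ed d)) := by
      simp [psB]
    rw [this]; exact mS_pos p.1 p.2 f j
  · have : psB d (.inr j) = ((0 : Ed d), (EuclideanSpace.single j (1:ℝ) : Ed d)) := by
      simp [psB]
    rw [this]; exact mS_mom p.1 p.2 f j

theorem exists_lift {d : ℕ} (g : 𝓢(Ed d × Ed d, H →L[ℂ] H')) (hg : TCSchwartz g) :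
    ∃ t : 𝓢(Ed d × Ed d, L1 H H'), ∀ X, (t X).1 = g X := by
  obtain ⟨-, hg⟩ := hg
  have htc : ∀ (p : List (Fin d) × List (Fin d)) X, IsTraceClass (mS p.1 p.2 g X) := by
    intro p X
    obtain ⟨C, hC⟩ := hg 0 p.1 p.2
    have := hC X
    rw [← mS_coe] at this
    simp only [pow_zero, ENNReal.ofReal_one, one_mul] at this
    exact lt_of_le_of_lt this ENNReal.ofReal_lt_top
  let U : List (Fin d) × List (Fin d) → Ed d × Ed d → L1 H H' :=
    fun p X => ⟨mS p.1 p.2 g X, htc p X⟩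
  have hbd : ∀ p (k : ℕ), ∃ C : ℝ, ∀ X, (1 + ‖X‖) ^ k * ‖U p X‖ ≤ C := by
    intro p k
    obtain ⟨C, hC⟩ := hg k p.1 p.2
    refine ⟨max C 0, fun X => ?_⟩
    have := hC X
    rw [← mS_coe] at this
    have h2 : ENNReal.ofReal ‖U p X‖ = traceNormE (mS p.1 p.2 g X) := L1.ofReal_norm _
    rw [← h2, ← ENNReal.ofReal_mul (by positivity)] at this
    have h3 := this.trans (ENNReal.ofReal_le_ofReal (le_max_left C 0))
    rwa [ENNReal.ofReal_le_ofReal_iff (le_max_right _ _)] at h3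
  let c : Fin d ⊕ Fin d → (Ed d × Ed d →L[ℝ] ℝ) :=
    fun i => LinearMap.toContinuousLinearMap ((psB d).coord i)
  have hder : ∀ p X, HasFDerivAt (fun y => L1.incl H H' (U p y))
      (∑ i, (c i).smulRight (L1.incl H H' (U (ext1 i p) X))) X := by
    intro p X
    have h1 := (mS p.1 p.2 g).hasFDerivAt X
    refine HasFDerivAt.congr_fderiv (f := ⇑(mS p.1 p.2 g)) h1 ((clm_basis (psB d) _).trans ?_)
    refine Finset.sum_congr rfl fun i _ => ?_
    congr 1
    rw [← SchwartzMap.lineDerivOp_apply_eq_fderiv, mS_ext1]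
    rfl
  choose B hB using fun p => hbd p 0
  have hder2 : ∀ p X, HasFDerivAt (U p) (∑ i, (c i).smulRight (U (ext1 i p) X)) X := by
    intro p X
    refine L1.lift_deriv c (U p) (fun i => U (ext1 i p)) (fun i j => U (ext1 j (ext1 i p)))
      (hder p) (fun i => hder (ext1 i p)) (C := ∑ i, ∑ j, |B (ext1 j (ext1 i p))|) ?_ X
    intro i j x
    have h1 := hB (ext1 j (ext1 i p)) x
    rw [pow_zero, one_mul] at h1
    refine (h1.trans (le_abs_self _)).trans ?_
    refine le_trans ?_ (Finset.single_le_sum (f := fun i => ∑ j, |B (ext1 j (ext1 i p))|)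
      (fun i _ => Finset.sum_nonneg fun j _ => abs_nonneg _) (Finset.mem_univ i))
    exact Finset.single_le_sum (f := fun j => |B (ext1 j (ext1 i p))|)
      (fun i _ => abs_nonneg _) (Finset.mem_univ j)
  obtain ⟨t, ht⟩ := closed_class_schwartz c {u | ∃ p, u = U p}
    (by
      rintro _ ⟨p, rfl⟩
      exact ⟨fun i => U (ext1 i p), fun i => ⟨_, rfl⟩, hder2 p⟩)
    (by
      rintro _ ⟨p, rfl⟩ k
      obtain ⟨C, hC⟩ := hbd p k
      refine ⟨C, fun x => le_trans ?_ (hC x)⟩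
      gcongr
      linarith) (U ([], [])) ⟨_, rfl⟩
  exact ⟨t, fun X => by rw [ht]; rfl⟩

theorem TCSchwartz_of_lift {d : ℕ} (q : 𝓢(Ed d × Ed d, H →L[ℂ] H'))
    (t : 𝓢(Ed d × Ed d, L1 H H')) (ht : ∀ X, (t X).1 = q X) : TCSchwartz q := by
  have hm : ∀ (a α : List (Fin d)) X, (mS a α t X).1 = mS a α q X := by
    intro a α
    unfold mS
    induction mkDirs a α with
    | nil => exact ht
    | cons v l ih =>
      intro X
      simp only [List.foldr_cons]
      rw [SchwartzMap.lineDerivOp_apply_eq_fderiv, SchwartzMap.lineDerivOp_apply_eq_fderiv]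
      have h1 : ⇑(List.foldr (fun v s => ∂_{v} s) q l)
          = fun Y => ((L1.incl H H').restrictScalars ℝ) (List.foldr (fun v s => ∂_{v} s) t l Y) := by
        ext1 Y; rw [← ih Y]; rfl
      rw [h1]
      have h2 := HasFDerivAt.comp (g := ⇑((L1.incl H H').restrictScalars ℝ)) X
        (((L1.incl H H').restrictScalars ℝ).hasFDerivAt)
        ((List.foldr (fun v s => ∂_{v} s) t l).hasFDerivAt X)
      have h3 := h2.fderiv
      rw [Function.comp_def] at h3
      rw [h3]; rfl
  refine ⟨fun X => by rw [← ht X]; exact (t X).2, fun k a α => ?_⟩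
  obtain ⟨C, -, hC⟩ := schwartz_bound (mS a α t) k
  refine ⟨C, fun X => ?_⟩
  rw [← mS_coe, ← hm, ← L1.ofReal_norm, ← ENNReal.ofReal_mul (by positivity)]
  exact ENNReal.ofReal_le_ofReal (hC X)

end Lift

section S6

/-- The magnetic phase factor. -/
def ph {d : ℕ} (ε lam : ℝ) (A : Ed d → Ed d) (x y : Ed d) : ℂ :=
  Complex.exp (-Complex.I * (((lam / ε) * lineInt A (ε • x) (ε • y) : ℝ) : ℂ))

theorem ph_self {d : ℕ} (ε lam : ℝ) (A : Ed d → Ed d) (x : Ed d) : ph ε lam A x x = 1 := by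
  simp [ph, lineInt_self]

theorem ph_mul_neg {d : ℕ} (ε lam : ℝ) (A : Ed d → Ed d) (x y : Ed d) :
    ph ε (-lam) A x y * ph ε lam A x y = 1 := by
  rw [ph, ph, ← Complex.exp_add, Complex.exp_eq_one_iff]
  refine ⟨0, ?_⟩
  push_cast
  ring

theorem ph_mul_symm {d : ℕ} (ε lam : ℝ) (A : Ed d → Ed d) (x y : Ed d) :
    ph ε lam A x y * ph ε lam A y x = 1 := by
  rw [ph, ph, ← Complex.exp_add, Complex.exp_eq_one_iff, lineInt_symm A (ε • x) (ε • y)]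
  refine ⟨0, ?_⟩
  push_cast
  ring

theorem ph_temperate {d : ℕ} (ε lam : ℝ) {A : Ed d → Ed d} (hA : IsPolyVF A) {W : Type*}
    [NormedAddCommGroup W] [NormedSpace ℝ W] (L M : W →L[ℝ] Ed d) :
    (fun w : W => ph ε lam A (L w) (M w)).HasTemperateGrowth := by
  have h1 : (fun w : W => ((ε • L).prod (ε • M)) w).HasTemperateGrowth :=
    ((ε • L).prod (ε • M)).hasTemperateGrowth
  have h2 := (lineInt_temperate hA).comp h1
  have h3 : (fun w : W => (lam / ε) * lineInt A (ε • L w) (ε • M w)).HasTemperateGrowth :=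
    (Function.HasTemperateGrowth.const (lam / ε)).mul h2
  exact temperate_exp.comp h3

theorem PF_clm_apply {d : ℕ} {H H' : Type*} [NormedAddCommGroup H] [NormedSpace ℂ H]
    [NormedAddCommGroup H'] [NormedSpace ℂ H'] [CompleteSpace H']
    (s : 𝓢(Ed d × Ed d, H →L[ℂ] H')) (p : Ed d × Ed d) (e : H) :
    PF s p e = ∫ η, Complex.exp (-Complex.I * ((⟪p.2, η⟫_ℝ : ℝ) : ℂ)) • s (p.1, η) e := by
  rw [PF_apply, ContinuousLinearMap.integral_apply (pfun_integrable s p)]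
  rfl

theorem opA_eq {d : ℕ} {H H' : Type*} [NormedAddCommGroup H] [NormedSpace ℂ H]
    [NormedAddCommGroup H'] [NormedSpace ℂ H'] [CompleteSpace H'] (ε lam : ℝ) (A : Ed d → Ed d)
    (s : 𝓢(Ed d × Ed d, H →L[ℂ] H')) (Ψ : Ed d → H) (x : Ed d) :
    opA ε lam A ⇑s Ψ x = (((2 * Real.pi) ^ d)⁻¹ : ℝ) •
      ∫ y, ph ε lam A x y • PF s ((ε / 2) • (x + y), y - x) (Ψ y) := by
  rw [opA]
  congr 1
  refine integral_congr_ae (Filter.Eventually.of_forall fun y => ?_)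
  simp only
  rw [PF_clm_apply, ← integral_smul]
  refine integral_congr_ae (Filter.Eventually.of_forall fun η => ?_)
  simp only [wPhase, ph, smul_smul]
  rw [mul_comm]

theorem exists_slice {W W' F : Type*} [NormedAddCommGroup W] [NormedSpace ℝ W]
    [NormedAddCommGroup W'] [NormedSpace ℝ W'] [NormedAddCommGroup F] [NormedSpace ℝ F]
    (s : 𝓢(W × W', F)) (x : W) : ∃ t : 𝓢(W', F), ∀ y, t y = s (x, y) := by
  have h1 : (fun y : W' => (x, y)).HasTemperateGrowth := by
    have : (fun y : W' => ((x, (0 : W')) : W × W') + (ContinuousLinearMap.inr ℝ W W') y).HasTemperateGrowth :=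
      (Function.HasTemperateGrowth.const _).add (ContinuousLinearMap.inr ℝ W W').hasTemperateGrowth
    convert this using 2
    simp
  refine ⟨SchwartzMap.compCLM ℝ h1 ⟨1, 1, fun y => ?_⟩ s, fun y => rfl⟩
  have : ‖y‖ ≤ ‖((x, y) : W × W')‖ := le_max_right _ _
  linarith

end S6

section S7

instance vol_haar (d : ℕ) : (volume : Measure (Ed d × Ed d)).IsAddHaarMeasure :=
  Measure.prod.instIsAddHaarMeasure _ _

instance vol_tg (d : ℕ) : (volume : Measure (Ed d × Ed d)).HasTemperateGrowth :=
  @Measure.IsAddHaarMeasure.instHasTemperateGrowth _ _ _ _ _ _ _ (vol_haar d)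

/-- The change of variables `(x, y) ↦ (ε (x + y) / 2, y - x)`. -/
def Lam (d : ℕ) (ε : ℝ) : Ed d × Ed d →L[ℝ] Ed d × Ed d :=
  ((ε / 2) • (ContinuousLinearMap.fst ℝ (Ed d) (Ed d) + ContinuousLinearMap.snd ℝ (Ed d) (Ed d))).prod
    (ContinuousLinearMap.snd ℝ (Ed d) (Ed d) - ContinuousLinearMap.fst ℝ (Ed d) (Ed d))

theorem Lam_apply {d : ℕ} (ε : ℝ) (p : Ed d × Ed d) :
    Lam d ε p = ((ε / 2) • (p.1 + p.2), p.2 - p.1) := rfl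

/-- Inverse of `Lam`. -/
def LamInv (d : ℕ) (ε : ℝ) : Ed d × Ed d →L[ℝ] Ed d × Ed d :=
  (ε⁻¹ • ContinuousLinearMap.fst ℝ (Ed d) (Ed d) - (1 / 2 : ℝ) • ContinuousLinearMap.snd ℝ (Ed d) (Ed d)).prod
    (ε⁻¹ • ContinuousLinearMap.fst ℝ (Ed d) (Ed d) + (1 / 2 : ℝ) • ContinuousLinearMap.snd ℝ (Ed d) (Ed d))

theorem LamInv_apply {d : ℕ} (ε : ℝ) (p : Ed d × Ed d) :
    LamInv d ε p = (ε⁻¹ • p.1 - (1 / 2 : ℝ) • p.2, ε⁻¹ • p.1 + (1 / 2 : ℝ) • p.2) := rfl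

theorem LamInv_Lam {d : ℕ} {ε : ℝ} (hε : 0 < ε) (p : Ed d × Ed d) : LamInv d ε (Lam d ε p) = p := by
  obtain ⟨x, y⟩ := p
  have h : ε⁻¹ * (ε / 2) = 1 / 2 := by field_simp
  simp only [Lam_apply, LamInv_apply, smul_smul, h, Prod.mk.injEq]
  constructor <;> module

theorem Lam_LamInv {d : ℕ} {ε : ℝ} (hε : 0 < ε) (p : Ed d × Ed d) : Lam d ε (LamInv d ε p) = p := by
  obtain ⟨x, y⟩ := p
  simp only [Lam_apply, LamInv_apply, Prod.mk.injEq]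
  constructor
  · have : (ε / 2) • (ε⁻¹ • x - (1 / 2 : ℝ) • y + (ε⁻¹ • x + (1 / 2 : ℝ) • y)) = (ε * ε⁻¹) • x := by module
    rw [this, mul_inv_cancel₀ hε.ne', one_smul]
  · module

theorem Lam_injective {d : ℕ} {ε : ℝ} (hε : 0 < ε) : Function.Injective (Lam d ε) :=
  Function.LeftInverse.injective (g := LamInv d ε) (LamInv_Lam hε)

theorem LamInv_injective {d : ℕ} {ε : ℝ} (hε : 0 < ε) : Function.Injective (LamInv d ε) :=
  Function.LeftInverse.injective (g := Lam d ε) (Lam_LamInv hε)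

/-- Pointwise composition as a real bilinear map. -/
def compR (H H' H'' : Type*) [NormedAddCommGroup H] [InnerProductSpace ℂ H] [CompleteSpace H]
    [NormedAddCommGroup H'] [InnerProductSpace ℂ H'] [CompleteSpace H']
    [NormedAddCommGroup H''] [InnerProductSpace ℂ H''] [CompleteSpace H''] :
    (H' →L[ℂ] H'') →L[ℝ] L1 H H' →L[ℝ] L1 H H'' :=
  (L1.compL H H' H'').bilinearRestrictScalars ℝ

theorem compR_apply {H H' H'' : Type*} [NormedAddCommGroup H] [InnerProductSpace ℂ H] [CompleteSpace H]
    [NormedAddCommGroup H'] [InnerProductSpace ℂ H'] [CompleteSpace H']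
    [NormedAddCommGroup H''] [InnerProductSpace ℂ H''] [CompleteSpace H''] (S : H' →L[ℂ] H'') (T : L1 H H') :
    compR H H' H'' S T = L1.compL H H' H'' S T := rfl

variable {d : ℕ} {H H' : Type*} [NormedAddCommGroup H] [InnerProductSpace ℂ H] [CompleteSpace H]
  [NormedAddCommGroup H'] [InnerProductSpace ℂ H'] [CompleteSpace H']

theorem exists_G {ε : ℝ} (hε : 0 < ε) (lam : ℝ) {A : Ed d → Ed d} (hA : IsPolyVF A)
    (a : 𝓢(Ed d × Ed d, H' →L[ℂ] H)) (b : 𝓢(Ed d × Ed d, L1 H H')) :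
    ∃ G : 𝓢((Ed d × Ed d) × Ed d, L1 H H), ∀ x y u, G ((x, y), u) =
      (ph ε lam A x u * ph ε lam A u y) • L1.compL H H' H (a (Lam d ε (x, u))) (b (Lam d ε (u, y))) := by
  obtain ⟨t, ht⟩ := exists_outer (compR H H' H) a b
  let X : (Ed d × Ed d) × Ed d →L[ℝ] Ed d :=
    (ContinuousLinearMap.fst ℝ _ _).comp (ContinuousLinearMap.fst ℝ (Ed d × Ed d) (Ed d))
  let Y : (Ed d × Ed d) × Ed d →L[ℝ] Ed d :=
    (ContinuousLinearMap.snd ℝ _ _).comp (ContinuousLinearMap.fst ℝ (Ed d × Ed d) (Ed d))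
  let U : (Ed d × Ed d) × Ed d →L[ℝ] Ed d := ContinuousLinearMap.snd ℝ (Ed d × Ed d) (Ed d)
  let L := ((Lam d ε).comp (X.prod U)).prod ((Lam d ε).comp (U.prod Y))
  have hL : Function.Injective L := by
    rintro ⟨⟨x, y⟩, u⟩ ⟨⟨x', y'⟩, u'⟩ h
    have h1 : Lam d ε (x, u) = Lam d ε (x', u') := congrArg Prod.fst h
    have h2 : Lam d ε (u, y) = Lam d ε (u', y') := congrArg Prod.snd h
    have h1 := Lam_injective hε h1
    have h2 := Lam_injective hε h2
    simp only [Prod.mk.injEq] at h1 h2 ⊢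
    exact ⟨⟨h1.1, h2.2⟩, h1.2⟩
  obtain ⟨s, hs⟩ := exists_pull L hL t
  have hT : (fun w => ph ε lam A (X w) (U w) * ph ε lam A (U w) (Y w)).HasTemperateGrowth :=
    (ph_temperate ε lam hA X U).mul (ph_temperate ε lam hA U Y)
  refine ⟨SchwartzMap.smulLeftCLM _ (fun w => ph ε lam A (X w) (U w) * ph ε lam A (U w) (Y w)) s,
    fun x y u => ?_⟩
  rw [SchwartzMap.smulLeftCLM_apply_apply hT, hs, ht]
  rfl

theorem norm_ph (ε lam : ℝ) (A : Ed d → Ed d) (x y : Ed d) : ‖ph ε lam A x y‖ = 1 := by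
  rw [ph, Complex.norm_exp]
  simp

theorem ph_continuous (ε lam : ℝ) {A : Ed d → Ed d} (hA : IsPolyVF A) (u : Ed d) :
    Continuous (fun y => ph ε lam A u y) := by
  have h : Continuous (fun w : Ed d × Ed d => ph ε lam A w.1 w.2) := (ph_temperate ε lam hA (ContinuousLinearMap.fst ℝ (Ed d) (Ed d))
    (ContinuousLinearMap.snd ℝ (Ed d) (Ed d))).1.continuous
  have h2 : Continuous (fun y : Ed d => (u, y)) := by fun_prop
  have h3 := Continuous.comp h h2
  exact h3

theorem swap_trick {ε : ℝ} (hε : 0 < ε) (lam : ℝ)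
    {A : Ed d → Ed d} (hA : IsPolyVF A)
    (fa : 𝓢(Ed d × Ed d, H' →L[ℂ] H)) (g : 𝓢(Ed d × Ed d, H →L[ℂ] H'))
    (G : 𝓢((Ed d × Ed d) × Ed d, L1 H H))
    (hG : ∀ x y u, (G ((x, y), u)).1 = (ph ε lam A x u * ph ε lam A u y) •
      (PF fa (Lam d ε (x, u))).comp (PF g (Lam d ε (u, y))))
    (φ : 𝓢(Ed d, ℂ)) (x : Ed d) (e : H) :
    opA ε lam A ⇑fa (opA ε lam A ⇑g (fun y => φ y • e)) x =
      (((2 * Real.pi) ^ d)⁻¹ : ℝ) • ∫ y, φ y • ((((2 * Real.pi) ^ d)⁻¹ : ℝ) • ∫ u, G ((x, y), u)).1 e := by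
  set c : ℝ := ((2 * Real.pi) ^ d)⁻¹ with hc
  -- the sliced kernel
  obtain ⟨G1, hG1⟩ := exists_pull
    ((ContinuousLinearEquiv.prodAssoc ℝ (Ed d) (Ed d) (Ed d)).symm :
      Ed d × Ed d × Ed d →L[ℝ] (Ed d × Ed d) × Ed d)
    (ContinuousLinearEquiv.prodAssoc ℝ (Ed d) (Ed d) (Ed d)).symm.injective G
  obtain ⟨G2, hG2⟩ := exists_slice G1 x
  have hG2' : ∀ y u, G2 (y, u) = G ((x, y), u) := fun y u => by rw [hG2, hG1]; rfl
  let ev : L1 H H →L[ℂ] H := (ContinuousLinearMap.apply ℂ H e).comp (L1.incl H H)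
  let G3 : 𝓢(Ed d × Ed d, H) := SchwartzMap.postcompCLM ev G2
  have hG3 : ∀ y u, G3 (y, u) = (G ((x, y), u)).1 e := fun y u => by
    show ev (G2 (y, u)) = _
    rw [hG2']; rfl
  have hφ : (fun w : Ed d × Ed d => φ w.1).HasTemperateGrowth :=
    φ.hasTemperateGrowth.comp (ContinuousLinearMap.fst ℝ (Ed d) (Ed d)).hasTemperateGrowth
  let G4 : 𝓢(Ed d × Ed d, H) := SchwartzMap.smulLeftCLM _ (fun w : Ed d × Ed d => φ w.1) G3
  have hG4 : ∀ y u, G4 (y, u) = φ y • (G ((x, y), u)).1 e := fun y u => by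
    show SchwartzMap.smulLeftCLM _ (fun w : Ed d × Ed d => φ w.1) G3 (y, u) = _
    rw [SchwartzMap.smulLeftCLM_apply_apply hφ, hG3]
  have hIntg : Integrable (fun p : Ed d × Ed d => G4 p) (volume.prod volume) := by
    rw [← Measure.volume_eq_prod]; exact G4.integrable
  have hsw := integral_integral_swap (f := fun y u => G4 (y, u)) hIntg
  have hslice : ∀ y, Integrable (fun u => G ((x, y), u)) := fun y => by
    obtain ⟨t, ht⟩ := exists_slice G (x, y)
    simpa [← ht] using t.integrable (μ := volume)
  -- left-hand side
  rw [opA_eq]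
  congr 1
  have lhs : ∀ u, ph ε lam A x u • PF fa ((ε / 2) • (x + u), u - x)
      (opA ε lam A ⇑g (fun y => φ y • e) u) = c • ∫ y, G4 (y, u) := fun u => by
    rw [opA_eq]
    have hI : Integrable (fun y => ph ε lam A u y • PF g ((ε / 2) • (u + y), y - u) (φ y • e)) := by
      obtain ⟨C, hC⟩ := (PF g).decay 0 0
      have hφ' : Integrable (fun y => C * ‖e‖ * ‖φ y‖) := (φ.integrable (μ := volume)).norm.const_mul _
      refine hφ'.mono' ?_ (Filter.Eventually.of_forall fun y => ?_)
      · apply Continuous.aestronglyMeasurable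
        refine (ph_continuous ε lam hA u).smul ?_
        refine ((PF g).continuous.comp (by fun_prop)).clm_apply ?_
        exact φ.continuous.smul continuous_const
      · have h0 := hC.2 ((ε / 2) • (u + y), y - u)
        simp only [pow_zero, one_mul, norm_iteratedFDeriv_zero] at h0
        rw [norm_smul, norm_ph, one_mul]
        refine (ContinuousLinearMap.le_opNorm _ _).trans ?_
        rw [norm_smul]
        calc _ ≤ C * (‖φ y‖ * ‖e‖) := by gcongr
          _ = _ := by ring
    rw [ContinuousLinearMap.map_smul_of_tower, ← ContinuousLinearMap.integral_comp_comm _ hI, smul_comm,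
      ← integral_smul]
    congr 1
    refine integral_congr_ae (Filter.Eventually.of_forall fun y => ?_)
    simp only [hG4, hG, Lam_apply, map_smul, _root_.smul_apply, ContinuousLinearMap.comp_apply,
      smul_smul]
    congr 1
    ring
  simp_rw [lhs]
  rw [integral_smul, ← hsw, ← integral_smul]
  refine integral_congr_ae (Filter.Eventually.of_forall fun y => ?_)
  simp only [hG4]
  rw [integral_smul, smul_comm]
  congr 2
  exact ev.integral_comp_comm (hslice y)

end S7

section S8

open scoped ContDiff

variable {d : ℕ} {H H' : Type*} [NormedAddCommGroup H] [InnerProductSpace ℂ H] [CompleteSpace H]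
  [NormedAddCommGroup H'] [InnerProductSpace ℂ H'] [CompleteSpace H']

theorem kernel_id {ε : ℝ} (hε : 0 < ε) (lam : ℝ)
    {A : Ed d → Ed d} (hA : IsPolyVF A)
    (fa : 𝓢(Ed d × Ed d, H' →L[ℂ] H)) (g : 𝓢(Ed d × Ed d, H →L[ℂ] H'))
    (q : 𝓢(Ed d × Ed d, H →L[ℂ] H))
    (hq : ∀ (Ψ : 𝓢(Ed d, H)) (x : Ed d),
      opA ε lam A ⇑q ⇑Ψ x = opA ε lam A ⇑fa (opA ε lam A ⇑g ⇑Ψ) x)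
    (G : 𝓢((Ed d × Ed d) × Ed d, L1 H H))
    (hG : ∀ x y u, (G ((x, y), u)).1 = (ph ε lam A x u * ph ε lam A u y) •
      (PF fa (Lam d ε (x, u))).comp (PF g (Lam d ε (u, y))))
    (N : 𝓢(Ed d × Ed d, L1 H H)) (hN : ∀ p, N p = ∫ u, G (p, u)) (x y : Ed d) :
    ph ε lam A x y • PF q (Lam d ε (x, y)) = ((((2 * Real.pi) ^ d)⁻¹ : ℝ) • N (x, y)).1 := by
  set c : ℝ := ((2 * Real.pi) ^ d)⁻¹ with hc
  have hc0 : c ≠ 0 := by positivity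
  ext e
  let F1 : Ed d → H := fun y => ph ε lam A x y • PF q (Lam d ε (x, y)) e
  let ev : L1 H H →L[ℂ] H := (ContinuousLinearMap.apply ℂ H e).comp (L1.incl H H)
  let F2 : Ed d → H := fun y => ev (c • N (x, y))
  have hF1 : Continuous F1 := by
    refine (ph_continuous ε lam hA x).smul ?_
    refine ((PF q).continuous.comp ((Lam d ε).continuous.comp ?_)).clm_apply continuous_const
    fun_prop
  have hF2 : Continuous F2 := by
    refine ev.continuous.comp ((N.continuous.comp ?_).const_smul c)
    fun_prop
  suffices h : F1 = F2 from congrFun h y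
  refine (Continuous.ae_eq_iff_eq volume hF1 hF2).1 ?_
  refine ae_eq_of_integral_contDiff_smul_eq (hF1.locallyIntegrable) (hF2.locallyIntegrable) ?_
  intro φ hφ hφc
  have h1 : HasCompactSupport (fun y => ((φ y : ℝ) : ℂ)) :=
    hφc.comp_left (g := fun t : ℝ => (t : ℂ)) (by simp)
  have h2 : ContDiff ℝ ∞ (fun y => ((φ y : ℝ) : ℂ)) := Complex.ofRealCLM.contDiff.comp hφ
  let φc : 𝓢(Ed d, ℂ) := h1.toSchwartzMap h2
  have hφc' : ∀ y, φc y = (φ y : ℂ) := fun y => rfl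
  let Ψ : 𝓢(Ed d, H) := SchwartzMap.postcompCLM (ContinuousLinearMap.toSpanSingleton ℂ e) φc
  have hΨ : ⇑Ψ = fun y => φc y • e := rfl
  have key := hq Ψ x
  rw [hΨ, swap_trick hε lam hA fa g G hG φc x e, opA_eq] at key
  have key := smul_right_injective H hc0 key
  calc ∫ y, φ y • F1 y = ∫ y, ph ε lam A x y • PF q ((ε / 2) • (x + y), y - x) (φc y • e) := by
        refine integral_congr_ae (Filter.Eventually.of_forall fun y => ?_)
        simp only [F1, hφc', map_smul, Lam_apply]
        rw [smul_comm, Complex.coe_smul]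
    _ = _ := key
    _ = _ := by
        refine integral_congr_ae (Filter.Eventually.of_forall fun y => ?_)
        simp only [F2, hφc', hN]
        rw [Complex.coe_smul]
        rfl

theorem exists_qlift {ε : ℝ} (hε : 0 < ε) (lam : ℝ)
    {A : Ed d → Ed d} (hA : IsPolyVF A)
    (fa : 𝓢(Ed d × Ed d, H' →L[ℂ] H)) (g : 𝓢(Ed d × Ed d, H →L[ℂ] H'))
    (gt : 𝓢(Ed d × Ed d, L1 H H')) (hgt : ∀ X, (gt X).1 = g X)
    (q : 𝓢(Ed d × Ed d, H →L[ℂ] H))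
    (hq : ∀ (Ψ : 𝓢(Ed d, H)) (x : Ed d),
      opA ε lam A ⇑q ⇑Ψ x = opA ε lam A ⇑fa (opA ε lam A ⇑g ⇑Ψ) x) :
    ∃ qt : 𝓢(Ed d × Ed d, L1 H H), (∀ X, (qt X).1 = q X) ∧
      ∀ X, PF qt (X, 0) = (((2 * Real.pi) ^ d)⁻¹ : ℝ) • ∫ u,
        L1.compL H H' H (PF fa (Lam d ε (ε⁻¹ • X, u))) (PF gt (Lam d ε (u, ε⁻¹ • X))) := by
  have hPg : ∀ p, PF g p = (PF gt p).1 := fun p =>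
    PF_postcomp (L1.incl H H') gt g (fun p => (hgt p).symm) p
  obtain ⟨G, hG⟩ := exists_G hε lam hA (PF fa) (PF gt)
  obtain ⟨N, hN⟩ := exists_partialInt G
  have hk := kernel_id hε lam hA fa g q hq G (fun x y u => by
    rw [hG, hPg]; rfl) N hN
  set c : ℝ := ((2 * Real.pi) ^ d)⁻¹ with hc
  have hc0 : c ≠ 0 := by positivity
  let P1 := ContinuousLinearMap.fst ℝ (Ed d) (Ed d)
  let P2 := ContinuousLinearMap.snd ℝ (Ed d) (Ed d)
  have hT := ph_temperate ε (-lam) hA P1 P2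
  let Q : 𝓢(Ed d × Ed d, L1 H H) :=
    SchwartzMap.smulLeftCLM _ (fun w => ph ε (-lam) A (P1 w) (P2 w)) (c • N)
  have hQ : ∀ x y, Q (x, y) = ph ε (-lam) A x y • (c • N (x, y)) := fun x y => by
    show SchwartzMap.smulLeftCLM _ _ _ _ = _
    rw [SchwartzMap.smulLeftCLM_apply_apply hT]
    rfl
  have hQ1 : ∀ x y, (Q (x, y)).1 = PF q (Lam d ε (x, y)) := fun x y => by
    rw [hQ, L1.smul_val, ← hk, smul_smul, ph_mul_neg, one_smul]
  obtain ⟨M, hM⟩ := exists_pull (LamInv d ε) (LamInv_injective hε) Q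
  have hM1 : ∀ p, (M p).1 = PF q p := fun p => by
    rw [hM, ← Prod.mk.eta (p := LamInv d ε p), hQ1, Prod.mk.eta, Lam_LamInv hε]
  obtain ⟨R, hR⟩ := exists_pull (P1.prod (-P2)) (fun p p' h => by
    have h1 : p.1 = p'.1 := by have h' := congrArg Prod.fst h; exact h'
    have h2 : -p.2 = -p'.2 := by have h' := congrArg Prod.snd h; exact h'
    exact Prod.ext h1 (neg_injective h2)) (PF M)
  have hPM : ∀ p, PF (PF q) p = (PF M p).1 := fun p =>
    PF_postcomp (L1.incl H H) M (PF q) (fun p => (hM1 p).symm) p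
  have hq1 : ∀ X, ((c • R) X).1 = q X := fun X => by
    obtain ⟨x, η⟩ := X
    show (c • R (x, η)).1 = _
    have hR' : R (x, η) = PF M (x, -η) := hR _
    have h3 := PF_PF q x (-η)
    rw [hPM, neg_neg, finrank_euclideanSpace_fin] at h3
    have h4 : (c • R (x, η)).1 = c • (R (x, η)).1 := rfl
    rw [h4, hR', h3, smul_smul, inv_mul_cancel₀ (by positivity), one_smul]
  refine ⟨c • R, hq1, fun X => ?_⟩
  have h5 : PF (c • R) (X, 0) = M (X, 0) := by
    apply L1.incl_injective
    show (PF (c • R) (X, 0)).1 = (M (X, 0)).1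
    rw [hM1]
    exact (PF_postcomp (L1.incl H H) (c • R) q (fun p => (hq1 p).symm) (X, 0)).symm
  rw [h5, hM]
  have h6 : LamInv d ε (X, 0) = (ε⁻¹ • X, ε⁻¹ • X) := by simp [LamInv_apply]
  rw [h6, hQ, ph_self, one_smul, hN]
  congr 1
  refine integral_congr_ae (Filter.Eventually.of_forall fun u => ?_)
  simp only [hG]
  rw [ph_mul_symm, one_smul]

end S8

section S9

open scoped FourierTransform

theorem integral_prod_schwartz {d : ℕ} {F : Type*} [NormedAddCommGroup F] [NormedSpace ℂ F]
    (s : 𝓢(Ed d × Ed d, F)) : ∫ p, s p = ∫ x, ∫ y, s (x, y) := by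
  have hIntg : Integrable (fun p : Ed d × Ed d => s p) (volume.prod volume) := by
    rw [← Measure.volume_eq_prod]; exact s.integrable
  rw [Measure.volume_eq_prod, integral_prod _ hIntg]

theorem integral_swap_schwartz {d : ℕ} {F : Type*} [NormedAddCommGroup F] [NormedSpace ℂ F]
    (s : 𝓢(Ed d × Ed d, F)) : ∫ x, ∫ y, s (x, y) = ∫ y, ∫ x, s (x, y) := by
  have hIntg : Integrable (fun p : Ed d × Ed d => s p) (volume.prod volume) := by
    rw [← Measure.volume_eq_prod]; exact s.integrable
  exact integral_integral_swap (f := fun x y => s (x, y)) hIntg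

theorem plancherel_slice {d : ℕ} {F1 F2 F3 : Type*} [NormedAddCommGroup F1] [NormedSpace ℂ F1]
    [CompleteSpace F1] [NormedAddCommGroup F2] [NormedSpace ℂ F2] [CompleteSpace F2]
    [NormedAddCommGroup F3] [NormedSpace ℂ F3] [CompleteSpace F3] (M : F1 →L[ℂ] F2 →L[ℂ] F3)
    (a : 𝓢(Ed d × Ed d, F1)) (b : 𝓢(Ed d × Ed d, F2)) (x : Ed d) :
    (((2 * Real.pi) ^ d)⁻¹ : ℝ) • ∫ z, M (PF a (x, z)) (PF b (x, -z)) =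
      ∫ η, M (a (x, η)) (b (x, η)) := by
  have h1 : ∀ z, M (PF a (x, z)) (PF b (x, -z)) =
      (fun w => M (𝓕 (slice a x) w) (𝓕⁻ (slice b x) w)) ((2 * π)⁻¹ • z) := fun z => by
    rw [PF_coe, PF_coe, pfun_eq_fourier, pfun_eq_fourier]
    simp only
    congr 1
    rw [SchwartzMap.fourierInv_coe, SchwartzMap.fourier_coe, Real.fourierInv_eq_fourier_neg, smul_neg]
  rw [integral_congr_ae (Filter.Eventually.of_forall h1), Measure.integral_comp_inv_smul volume
      (fun w => M (𝓕 (slice a x) w) (𝓕⁻ (slice b x) w)) (2 * π), finrank_euclideanSpace_fin, smul_smul, abs_of_pos (by positivity),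
    inv_mul_cancel₀ (by positivity), one_smul, SchwartzMap.integral_bilin_fourier_eq,
    FourierTransform.fourier_fourierInv_eq]
  rfl

variable {d : ℕ} {H H' : Type*} [NormedAddCommGroup H] [InnerProductSpace ℂ H] [CompleteSpace H]
  [NormedAddCommGroup H'] [InnerProductSpace ℂ H'] [CompleteSpace H']

theorem exists_prod {W F1 F2 F3 : Type*} [NormedAddCommGroup W] [NormedSpace ℝ W]
    [FiniteDimensional ℝ W] [NormedAddCommGroup F1] [NormedSpace ℝ F1]
    [NormedAddCommGroup F2] [NormedSpace ℝ F2] [NormedAddCommGroup F3] [NormedSpace ℝ F3]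
    (B : F1 →L[ℝ] F2 →L[ℝ] F3) (f : 𝓢(W, F1)) (g : 𝓢(W, F2)) :
    ∃ t : 𝓢(W, F3), ∀ p, t p = B (f p) (g p) := by
  obtain ⟨s, hs⟩ := exists_outer B f g
  obtain ⟨t, ht⟩ := exists_pull ((ContinuousLinearMap.id ℝ W).prod (ContinuousLinearMap.id ℝ W))
    (fun p p' h => by have h' := congrArg Prod.fst h; exact h') s
  exact ⟨t, fun p => by rw [ht, hs]; rfl⟩

theorem integral_symbol_id {ε : ℝ} (hε : 0 < ε)
    (fa : 𝓢(Ed d × Ed d, H' →L[ℂ] H)) (gt : 𝓢(Ed d × Ed d, L1 H H'))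
    (qt : 𝓢(Ed d × Ed d, L1 H H))
    (hqt : ∀ X, PF qt (X, 0) = (((2 * Real.pi) ^ d)⁻¹ : ℝ) • ∫ u,
        L1.compL H H' H (PF fa (Lam d ε (ε⁻¹ • X, u))) (PF gt (Lam d ε (u, ε⁻¹ • X))))
    (t : 𝓢(Ed d × Ed d, L1 H H)) (ht : ∀ X, t X = L1.compL H H' H (fa X) (gt X)) :
    ∫ X, qt X = ∫ X, t X := by
  set c : ℝ := ((2 * Real.pi) ^ d)⁻¹ with hc
  let P1 := ContinuousLinearMap.fst ℝ (Ed d) (Ed d)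
  let P2 := ContinuousLinearMap.snd ℝ (Ed d) (Ed d)
  obtain ⟨R, hR⟩ := exists_pull (P1.prod (-P2)) (fun p p' h => by
    have h1 : p.1 = p'.1 := by have h' := congrArg Prod.fst h; exact h'
    have h2 : -p.2 = -p'.2 := by have h' := congrArg Prod.snd h; exact h'
    exact Prod.ext h1 (neg_injective h2)) (PF gt)
  obtain ⟨K, hK⟩ := exists_prod (compR H H' H) (PF fa) R
  have hK' : ∀ x z, K (x, z) = L1.compL H H' H (PF fa (x, z)) (PF gt (x, -z)) := fun x z => by
    rw [hK, hR]; rfl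
  obtain ⟨S, hS⟩ := exists_pull ((P1 + (ε / 2) • P2).prod P2) (fun p p' h => by
    have h1 : p.1 + (ε / 2) • p.2 = p'.1 + (ε / 2) • p'.2 := by
      have h' := congrArg Prod.fst h; exact h'
    have h2 : p.2 = p'.2 := by have h' := congrArg Prod.snd h; exact h'
    rw [h2] at h1
    exact Prod.ext (add_right_cancel h1) h2) K
  have hS' : ∀ x z, S (x, z) = K (x + (ε / 2) • z, z) := fun x z => hS _
  have e1 : ∀ X, ∫ η, qt (X, η) = c • ∫ z, S (X, z) := fun X => by
    have h1 : PF qt (X, 0) = ∫ η, qt (X, η) := by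
      rw [PF_apply]; simp
    rw [← h1, hqt, ← integral_add_left_eq_self _ (ε⁻¹ • X)]
    congr 1
    refine integral_congr_ae (Filter.Eventually.of_forall fun z => ?_)
    have h2 : (ε / 2) • (ε⁻¹ • X + (ε⁻¹ • X + z)) = X + (ε / 2) • z := by
      have : (ε / 2) • (ε⁻¹ • X + (ε⁻¹ • X + z)) = (ε * ε⁻¹) • X + (ε / 2) • z := by module
      rw [this, mul_inv_cancel₀ hε.ne', one_smul]
    have h3 : (ε / 2) • (ε⁻¹ • X + z + ε⁻¹ • X) = X + (ε / 2) • z := by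
      rw [← h2]; congr 1; abel
    simp only [Lam_apply, hS', hK']
    rw [h2, h3]
    congr 3
    · abel_nf
    · abel_nf
  have e2 : ∀ z, ∫ X, S (X, z) = ∫ X, K (X, z) := fun z => by
    simp_rw [hS']
    exact integral_add_right_eq_self (fun X => K (X, z)) _
  calc ∫ X, qt X = ∫ X, ∫ η, qt (X, η) := integral_prod_schwartz qt
    _ = c • ∫ X, ∫ z, S (X, z) := by simp_rw [e1]; rw [integral_smul]
    _ = c • ∫ z, ∫ X, S (X, z) := by rw [integral_swap_schwartz]
    _ = c • ∫ z, ∫ X, K (X, z) := by simp_rw [e2]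
    _ = ∫ X, c • ∫ z, K (X, z) := by rw [← integral_swap_schwartz, integral_smul]
    _ = ∫ X, ∫ η, t (X, η) := by
        simp_rw [hK', ht, hc, plancherel_slice]
    _ = ∫ X, t X := (integral_prod_schwartz t).symm

theorem main_aux (ε lam : ℝ) (hε : 0 < ε)
    (A : Ed d → Ed d) (hA : IsPolyVF A)
    (f g : SchwartzMap (Ed d × Ed d) (H →L[ℂ] H')) (hg : TCSchwartz g)
    (q : SchwartzMap (Ed d × Ed d) (H →L[ℂ] H))
    (hq : ∀ (Ψ : SchwartzMap (Ed d) H) (x : Ed d),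
      opA ε lam A (⇑q) (⇑Ψ) x =
        opA ε lam A (fun X => ContinuousLinearMap.adjoint (f X)) (opA ε lam A (⇑g) (⇑Ψ)) x) :
    TCSchwartz q ∧
    Integrable (fun X : Ed d × Ed d => trH (q X)) volume ∧
    Integrable
      (fun X : Ed d × Ed d => trH ((ContinuousLinearMap.adjoint (f X)).comp (g X))) volume ∧
    ∫ X : Ed d × Ed d, trH (q X) =
      ∫ X : Ed d × Ed d, trH ((ContinuousLinearMap.adjoint (f X)).comp (g X)) := by
  let adj : (H →L[ℂ] H') →L[ℝ] (H' →L[ℂ] H) :=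
    { toFun := fun T => ContinuousLinearMap.adjoint T
      map_add' := fun S T => map_add _ S T
      map_smul' := fun r T => by
        rw [← Complex.coe_smul, map_smulₛₗ]
        simp
      cont := ContinuousLinearMap.adjoint.continuous }
  let fa : 𝓢(Ed d × Ed d, H' →L[ℂ] H) := SchwartzMap.postcompCLM adj f
  have hfa : ⇑fa = fun X => ContinuousLinearMap.adjoint (f X) := rfl
  obtain ⟨gt, hgt⟩ := exists_lift g hg
  obtain ⟨qt, hqt, hqt0⟩ := exists_qlift hε lam hA fa g gt hgt q hq
  obtain ⟨t, ht⟩ := exists_prod (compR H H' H) fa gt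
  have hid := integral_symbol_id hε fa gt qt hqt0 t ht
  have h1 : ∀ X, trH (q X) = L1.trL H (qt X) := fun X => by rw [L1.trL_apply, hqt]
  have h2 : ∀ X, trH ((ContinuousLinearMap.adjoint (f X)).comp (g X)) = L1.trL H (t X) := fun X => by
    rw [L1.trL_apply, ht, compR_apply, L1.compL_apply, hgt]
    rfl
  refine ⟨TCSchwartz_of_lift q qt hqt, ?_, ?_, ?_⟩
  · simp_rw [h1]
    exact (L1.trL H).integrable_comp qt.integrable
  · simp_rw [h2]
    exact (L1.trL H).integrable_comp t.integrable
  · simp_rw [h1, h2]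
    rw [ContinuousLinearMap.integral_comp_comm _ qt.integrable,
      ContinuousLinearMap.integral_comp_comm _ t.integrable, hid]

end S9

theorem statement_6 {d : ℕ} (ε lam : ℝ) (hε : 0 < ε) (hlam : 0 < lam)
    {H H' : Type*}
    [NormedAddCommGroup H] [InnerProductSpace ℂ H] [CompleteSpace H]
    [TopologicalSpace.SeparableSpace H]
    [NormedAddCommGroup H'] [InnerProductSpace ℂ H'] [CompleteSpace H']
    [TopologicalSpace.SeparableSpace H']
    (A : Ed d → Ed d) (hA : IsPolyVF A)
    (f g : SchwartzMap (Ed d × Ed d) (H →L[ℂ] H'))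
    (hf : TCSchwartz f) (hg : TCSchwartz g)
    -- `q` is the magnetic Weyl product `f* ♯ g`, characterized through the quantization
    (q : SchwartzMap (Ed d × Ed d) (H →L[ℂ] H))
    (hq : ∀ (Ψ : SchwartzMap (Ed d) H) (x : Ed d),
      opA ε lam A (⇑q) (⇑Ψ) x =
        opA ε lam A (fun X => ContinuousLinearMap.adjoint (f X)) (opA ε lam A (⇑g) (⇑Ψ)) x) :
    TCSchwartz q ∧
    Integrable (fun X : Ed d × Ed d => trH (q X)) volume ∧
    Integrable
      (fun X : Ed d × Ed d => trH ((ContinuousLinearMap.adjoint (f X)).comp (g X))) volume ∧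
    ∫ X : Ed d × Ed d, trH (q X) =
      ∫ X : Ed d × Ed d, trH ((ContinuousLinearMap.adjoint (f X)).comp (g X)) := by
  exact main_aux ε lam hε A hA f g hg q hq

end
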